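/- There exists a unique real number t ≥ 0 such that ∫₁^∞ [P(s) − (P(s)² + P(2s))/2] e^{(1−s)t} ds = 0; moreover this unique t satisfies 1.044 < t < 1.045. -/

import Mathlib

open MeasureTheory Real

/-- The prime zeta function `P(s) = ∑_p p^{-s}` (sum over all primes). -/
noncomputable def primeZeta (s : ℝ) : ℝ := ∑' p : Nat.Primes, (p.1 : ℝ) ^ (-s)

/-- The set of `k`-almost primes: positive integers with exactly `k` prime
factors counted with multiplicity. -/
def almostPrimes (k : ℕ) : Set ℕ := {n | 0 < n ∧ n.primeFactorsList.length = k}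

/-- `P_k(s) = ∑_{n ∈ N_k} n^{-s}`; note `P_0(s) = 1` since `N_0 = {1}`. -/
noncomputable def Pk (k : ℕ) (s : ℝ) : ℝ := ∑' n : almostPrimes k, (n.1 : ℝ) ^ (-s)

/-- Translated sum `f(A, h) = ∑_{a ∈ A} 1/(a (log a + h))`. -/
noncomputable def transSum (A : Set ℕ) (h : ℝ) : ℝ :=
  ∑' a : A, 1 / ((a.1 : ℝ) * (Real.log a.1 + h))

/-!
The prime zeta function and the zeta function of the products of two primes (the subtracted term)
are sums of exponentials `c e^(-l s)` with `c, l ≥ 0`. They cross exactly once, at some `s₀`: to the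
left of `s₀` the semiprimes dominate, to the right the primes. Hence, if `I t` is the integral of
the theorem, `e^((s₀ - 1) t) I t` is strictly decreasing, so that `I` has at most one zero, which is
located by the signs of `I 1.044` and `I 1.045`.

For these two signs, the two-point Gauss rule underestimates and Simpson's rule overestimates the
integral of each positive sum of exponentials, so no derivative bounds are needed. The integrands
are evaluated in interval arithmetic: with `2, 3, 5` removed from the Euler product, `artanh q` is
close to `q + q ^ 3 / 3` for `q = p ^ (-s)`, which expresses the prime zeta function through
`log ζ` at `s`, `2 s` and `3 s` up to a tiny error, and `ζ` is computed by Euler–Maclaurin.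
-/

/-! ### Sums of exponentials -/

/-- `F` is, on the half-line `s > σ`, a countable sum of exponentials `∑ᵢ cᵢ e^(-lᵢ s)` with
coefficients `cᵢ ≥ 0` and rates `lᵢ > 0`. On such functions the two-point Gauss rule is a lower
bound and the Simpson rule an upper bound for the integral. -/
def IsExpSum (σ : ℝ) (F : ℝ → ℝ) : Prop :=
  ∃ (ι : Type) (_ : Countable ι) (c l : ι → ℝ), (∀ i, 0 ≤ c i) ∧ (∀ i, 0 < l i) ∧
    ∀ s, σ < s → HasSum (fun i => c i * exp (-(l i * s))) (F s)

namespace IsExpSum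

variable {σ : ℝ} {F G : ℝ → ℝ}

theorem add (hF : IsExpSum σ F) (hG : IsExpSum σ G) : IsExpSum σ fun s => F s + G s := by
  obtain ⟨ι, _, c, l, hc, hl, h⟩ := hF
  obtain ⟨κ, _, d, m, hd, hm, k⟩ := hG
  refine ⟨ι ⊕ κ, inferInstance, Sum.elim c d, Sum.elim l m, ?_, ?_, fun s hs => ?_⟩
  · exact Sum.rec hc hd
  · exact Sum.rec hl hm
  · exact HasSum.sum (h s hs) (k s hs)

theorem mul (hF : IsExpSum σ F) (hG : IsExpSum σ G) : IsExpSum σ fun s => F s * G s := by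
  obtain ⟨ι, _, c, l, hc, hl, h⟩ := hF
  obtain ⟨κ, _, d, m, hd, hm, k⟩ := hG
  refine ⟨ι × κ, inferInstance, fun i => c i.1 * d i.2, fun i => l i.1 + m i.2,
    fun i => mul_nonneg (hc _) (hd _), fun i => add_pos (hl _) (hm _), fun s hs => ?_⟩
  have hsum := (h s hs).mul (k s hs) ((h s hs).summable.mul_of_nonneg (k s hs).summable
    (fun i => mul_nonneg (hc _) (exp_pos _).le) fun i => mul_nonneg (hd _) (exp_pos _).le)
  refine hsum.congr_fun fun i => ?_
  rw [add_mul, neg_add, exp_add]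
  ring

theorem const_mul (hF : IsExpSum σ F) {a : ℝ} (ha : 0 ≤ a) : IsExpSum σ fun s => a * F s := by
  obtain ⟨ι, hι, c, l, hc, hl, h⟩ := hF
  refine ⟨ι, hι, fun i => a * c i, l, fun i => mul_nonneg ha (hc i), hl, fun s hs => ?_⟩
  simpa only [mul_assoc] using (h s hs).mul_left a

theorem mono {τ : ℝ} (hF : IsExpSum σ F) (h : σ ≤ τ) : IsExpSum τ F := by
  obtain ⟨ι, hι, c, l, hc, hl, hsum⟩ := hF
  exact ⟨ι, hι, c, l, hc, hl, fun s hs => hsum s (h.trans_lt hs)⟩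

theorem comp_const_mul {a : ℝ} (hF : IsExpSum (a * σ) F) (ha : 0 < a) :
    IsExpSum σ fun s => F (a * s) := by
  obtain ⟨ι, hι, c, l, hc, hl, h⟩ := hF
  refine ⟨ι, hι, c, fun i => a * l i, hc, fun i => mul_pos ha (hl i), fun s hs => ?_⟩
  refine (h (a * s) (mul_lt_mul_of_pos_left hs ha)).congr_fun fun i => ?_
  ring_nf

theorem mul_exp (hF : IsExpSum σ F) {t : ℝ} (ht : 0 ≤ t) :
    IsExpSum σ fun s => F s * exp ((σ - s) * t) := by
  obtain ⟨ι, hι, c, l, hc, hl, h⟩ := hF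
  refine ⟨ι, hι, fun i => c i * exp (σ * t), fun i => l i + t,
    fun i => mul_nonneg (hc i) (exp_pos _).le, fun i => add_pos_of_pos_of_nonneg (hl i) ht,
    fun s hs => ?_⟩
  refine ((h s hs).mul_right (exp ((σ - s) * t))).congr_fun fun i => ?_
  rw [mul_assoc, mul_assoc, ← exp_add, ← exp_add]
  ring_nf

theorem nonneg (hF : IsExpSum σ F) {s : ℝ} (hs : σ < s) : 0 ≤ F s := by
  obtain ⟨ι, _, c, l, hc, _, h⟩ := hF
  exact (h s hs).nonneg fun i => mul_nonneg (hc i) (exp_pos _).le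

theorem antitoneOn (hF : IsExpSum σ F) : AntitoneOn F (Set.Ioi σ) := by
  obtain ⟨ι, _, c, l, hc, hl, h⟩ := hF
  intro s hs r hr hsr
  refine hasSum_le (fun i => ?_) (h r hr) (h s hs)
  have := hc i
  have := (hl i).le
  gcongr

theorem intervalIntegrable (hF : IsExpSum σ F) {a b : ℝ} (ha : σ < a) (hb : σ < b) :
    IntervalIntegrable F volume a b :=
  (hF.antitoneOn.mono fun _ hx => (lt_min ha hb).trans_le hx.1).intervalIntegrable

end IsExpSum

theorem hasSum_integral_exp {ι : Type} [Countable ι] {c l : ι → ℝ} {σ : ℝ} {F : ℝ → ℝ}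
    (hc : ∀ i, 0 ≤ c i) (hl : ∀ i, 0 < l i)
    (h : ∀ s, σ < s → HasSum (fun i => c i * exp (-(l i * s))) (F s)) {a b : ℝ} (ha : σ < a)
    (hab : a ≤ b) :
    HasSum (fun i => c i * ∫ s in a..b, exp (-(l i * s))) (∫ s in a..b, F s) := by
  have hint := intervalIntegral.hasSum_integral_of_dominated_convergence (μ := volume)
    (F := fun i s => c i * exp (-(l i * s))) (f := F) (a := a) (b := b)
    (fun i _ => c i * exp (-(l i * a)))
    (fun i => by apply Continuous.aestronglyMeasurable; fun_prop)
    (fun i => .of_forall fun s hs => by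
      rw [Set.uIoc_of_le hab] at hs
      have := hc i
      have := (hl i).le
      have := hs.1.le
      rw [norm_of_nonneg (by positivity)]
      gcongr)
    (.of_forall fun _ _ => (h a ha).summable)
    (by simp)
    (.of_forall fun s hs => by
      rw [Set.uIoc_of_le hab] at hs
      exact h s (ha.trans hs.1))
  simpa only [intervalIntegral.integral_const_mul] using hint

theorem integral_exp_neg_mul {l : ℝ} (hl : l ≠ 0) (m h : ℝ) :
    ∫ s in (m - h)..(m + h), exp (-(l * s)) = 2 * exp (-(l * m)) * (sinh (l * h) / l) := by
  have hder : ∀ s ∈ Set.uIcc (m - h) (m + h),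
      HasDerivAt (fun s => -exp (-(l * s)) / l) (exp (-(l * s))) s := fun s _ => by
    refine (((hasDerivAt_id s).const_mul l).neg.exp.neg.div_const l).congr_deriv ?_
    simp [field]
  rw [intervalIntegral.integral_eq_sub_of_hasDerivAt hder
      (Continuous.intervalIntegrable (by fun_prop) _ _), sinh_eq,
    show -(l * (m + h)) = -(l * m) + -(l * h) by ring,
    show -(l * (m - h)) = -(l * m) + l * h by ring, exp_add, exp_add]
  ring

theorem two_mul_add_one_le_three_pow (k : ℕ) : 2 * k + 1 ≤ 3 ^ k := by
  induction k with
  | zero => rfl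
  | succ k ih => rw [pow_succ]; omega

theorem mul_cosh_le_sinh {y z : ℝ} (hy : 0 ≤ y) (hz : z ^ 2 ≤ y ^ 2 / 3) :
    y * cosh z ≤ sinh y := by
  refine hasSum_le (fun k => ?_) ((hasSum_cosh z).mul_left y) (hasSum_sinh y)
  have hk : (2 * k + 1 : ℝ) ≤ 3 ^ k := mod_cast two_mul_add_one_le_three_pow k
  have hpow : z ^ (2 * k) * (2 * k + 1) ≤ y ^ (2 * k) := calc
    z ^ (2 * k) * (2 * k + 1) ≤ (y ^ 2 / 3) ^ k * 3 ^ k := by rw [pow_mul]; gcongr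
    _ = y ^ (2 * k) := by rw [← mul_pow, div_mul_cancel₀ _ three_ne_zero, pow_mul]
  rw [Nat.factorial_succ, pow_succ, ← mul_div_assoc, div_le_div_iff₀ (by positivity)
    (by positivity)]
  push_cast
  calc y * z ^ (2 * k) * ((2 * k + 1) * (2 * k).factorial)
      = y * (2 * k).factorial * (z ^ (2 * k) * (2 * k + 1)) := by ring
    _ ≤ y * (2 * k).factorial * y ^ (2 * k) := by gcongr
    _ = y ^ (2 * k) * y * (2 * k).factorial := by ring

theorem three_mul_sinh_le {y : ℝ} (hy : 0 ≤ y) : 3 * sinh y ≤ y * (cosh y + 2) := by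
  have hrhs : HasSum (fun k : ℕ => y * (y ^ (2 * k) / (2 * k).factorial + if k = 0 then 2 else 0))
      (y * (cosh y + 2)) :=
    ((hasSum_cosh y).add (hasSum_ite_eq 0 2)).mul_left y
  refine hasSum_le (fun k => ?_) ((hasSum_sinh y).mul_left 3) hrhs
  rcases k.eq_zero_or_pos with rfl | hk
  · norm_num
    linarith
  · have hk' : (1 : ℝ) ≤ k := mod_cast hk
    rw [if_neg hk.ne', add_zero, Nat.factorial_succ, pow_succ, ← mul_div_assoc, ← mul_div_assoc,
      div_le_div_iff₀ (by positivity) (by positivity)]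
    push_cast
    calc 3 * (y ^ (2 * k) * y) * (2 * k).factorial
        ≤ (2 * k + 1) * (y ^ (2 * k) * y) * (2 * k).factorial := by gcongr; linarith
      _ = y * y ^ (2 * k) * ((2 * k + 1) * (2 * k).factorial) := by ring

theorem gauss_le_integral_exp {l h d : ℝ} (hl : 0 < l) (hh : 0 ≤ h) (hd : d ^ 2 ≤ h ^ 2 / 3)
    (m : ℝ) :
    h * (exp (-(l * (m - d))) + exp (-(l * (m + d)))) ≤
      ∫ s in (m - h)..(m + h), exp (-(l * s)) := by
  have hcosh : h * cosh (l * d) ≤ sinh (l * h) / l := by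
    rw [le_div_iff₀ hl, mul_right_comm, mul_comm h]
    refine mul_cosh_le_sinh (by positivity) ?_
    rw [mul_pow, mul_pow, mul_div_assoc]
    gcongr
  rw [integral_exp_neg_mul hl.ne']
  calc h * (exp (-(l * (m - d))) + exp (-(l * (m + d))))
      = 2 * exp (-(l * m)) * (h * cosh (l * d)) := by
        rw [cosh_eq, show -(l * (m - d)) = -(l * m) + l * d by ring,
          show -(l * (m + d)) = -(l * m) + -(l * d) by ring, exp_add, exp_add]
        ring
    _ ≤ 2 * exp (-(l * m)) * (sinh (l * h) / l) := by gcongr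

theorem integral_exp_le_simpson {l h : ℝ} (hl : 0 < l) (hh : 0 ≤ h) (m : ℝ) :
    ∫ s in (m - h)..(m + h), exp (-(l * s)) ≤
      h / 3 * (exp (-(l * (m - h))) + 4 * exp (-(l * m)) + exp (-(l * (m + h)))) := by
  have hsinh : sinh (l * h) / l ≤ h / 3 * (cosh (l * h) + 2) := by
    rw [div_le_iff₀ hl]
    linarith [three_mul_sinh_le (y := l * h) (by positivity)]
  rw [integral_exp_neg_mul hl.ne']
  calc 2 * exp (-(l * m)) * (sinh (l * h) / l)
      ≤ 2 * exp (-(l * m)) * (h / 3 * (cosh (l * h) + 2)) := by gcongr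
    _ = h / 3 * (exp (-(l * (m - h))) + 4 * exp (-(l * m)) + exp (-(l * (m + h)))) := by
        rw [cosh_eq, show -(l * (m - h)) = -(l * m) + l * h by ring,
          show -(l * (m + h)) = -(l * m) + -(l * h) by ring, exp_add, exp_add]
        ring

namespace IsExpSum

variable {σ : ℝ} {F : ℝ → ℝ} {m h : ℝ}

theorem gauss_le_integral (hF : IsExpSum σ F) {d : ℝ} (hh : 0 ≤ h) (hd : d ^ 2 ≤ h ^ 2 / 3)
    (hm : σ < m - h) : h * (F (m - d) + F (m + d)) ≤ ∫ s in (m - h)..(m + h), F s := by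
  obtain ⟨ι, _, c, l, hc, hl, hsum⟩ := hF
  have hdh : |d| ≤ h := abs_le_of_sq_le_sq (by nlinarith [sq_nonneg h]) hh
  obtain ⟨hd₁, hd₂⟩ := abs_le.mp hdh
  have hnodes := ((hsum (m - d) (by linarith)).add (hsum (m + d) (by linarith))).mul_left h
  refine hasSum_le (fun i => ?_) hnodes (hasSum_integral_exp hc hl hsum hm (by linarith))
  rw [← mul_add, mul_left_comm]
  exact mul_le_mul_of_nonneg_left (gauss_le_integral_exp (hl i) hh hd m) (hc i)

theorem integral_le_simpson (hF : IsExpSum σ F) (hh : 0 ≤ h) (hm : σ < m - h) :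
    ∫ s in (m - h)..(m + h), F s ≤ h / 3 * (F (m - h) + 4 * F m + F (m + h)) := by
  obtain ⟨ι, _, c, l, hc, hl, hsum⟩ := hF
  have hnodes := (((hsum (m - h) hm).add ((hsum m (by linarith)).mul_left 4)).add
    (hsum (m + h) (by linarith))).mul_left (h / 3)
  refine hasSum_le (fun i => ?_) (hasSum_integral_exp hc hl hsum hm (by linarith)) hnodes
  rw [mul_left_comm 4, ← mul_add, ← mul_add, mul_left_comm]
  exact mul_le_mul_of_nonneg_left (integral_exp_le_simpson (hl i) hh m) (hc i)

end IsExpSum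

/-! ### The sieved Euler product -/

/-- The Riemann zeta function on the real half-line `s > 1`, as a real-valued series. -/
noncomputable def realZeta (s : ℝ) : ℝ := ∑' n : ℕ, (n : ℝ) ^ (-s)

/-- The logarithm of the Euler product over the primes outside the finite set `S`. -/
noncomputable def siftedLog (S : Finset Nat.Primes) (s : ℝ) : ℝ :=
  ∑' p : {p : Nat.Primes // p ∉ S}, -log (1 - (p.1 : ℝ) ^ (-s))

theorem one_lt_prime (p : Nat.Primes) : (1 : ℝ) < p := by exact_mod_cast p.2.one_lt

section Sieve

variable {s : ℝ}

theorem rpow_neg_lt_one {x : ℝ} (hx : 1 < x) (hs : 0 < s) : x ^ (-s) < 1 :=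
  rpow_lt_one_of_one_lt_of_neg hx (neg_lt_zero.2 hs)

theorem summable_nat_rpow_neg (hs : 1 < s) : Summable fun n : ℕ => (n : ℝ) ^ (-s) :=
  Real.summable_nat_rpow.2 (neg_lt_neg hs)

theorem summable_prime_rpow_neg (hs : 1 < s) : Summable fun p : Nat.Primes => (p : ℝ) ^ (-s) :=
  Nat.Primes.summable_rpow.2 (neg_lt_neg hs)

theorem summable_neg_log_euler_factor (hs : 1 < s) :
    Summable fun p : Nat.Primes => -log (1 - (p : ℝ) ^ (-s)) := by
  simpa only [sub_eq_add_neg] using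
    (Real.summable_log_one_add_of_summable (summable_prime_rpow_neg hs).neg).neg

theorem exp_tsum_neg_log_euler_factor (hs : 1 < s) :
    exp (∑' p : Nat.Primes, -log (1 - (p : ℝ) ^ (-s))) = realZeta s := by
  let f : ℕ →*₀ ℝ :=
    { toFun := fun n => (n : ℝ) ^ (-s)
      map_zero' := by simp only [Nat.cast_zero]; exact zero_rpow (by linarith)
      map_one' := by simp
      map_mul' := fun m n => by push_cast; exact mul_rpow m.cast_nonneg n.cast_nonneg }
  have euler := (EulerProduct.eulerProduct_completely_multiplicative_hasProd (f := f)
    (summable_nat_rpow_neg hs).norm).tprod_eq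
  have hpos (p : Nat.Primes) : 0 < (1 - (p : ℝ) ^ (-s))⁻¹ :=
    inv_pos.2 (sub_pos.2 (rpow_neg_lt_one (one_lt_prime p) (by linarith)))
  have hexp := Real.rexp_tsum_eq_tprod hpos
    (by simpa only [log_inv] using summable_neg_log_euler_factor hs)
  simp only [log_inv] at hexp
  exact hexp.trans euler

theorem realZeta_pos (hs : 1 < s) : 0 < realZeta s :=
  exp_tsum_neg_log_euler_factor hs ▸ exp_pos _

theorem siftedLog_eq_log (S : Finset Nat.Primes) (hs : 1 < s) :
    siftedLog S s = log (realZeta s * ∏ p ∈ S, (1 - (p : ℝ) ^ (-s))) := by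
  have hpos (p : Nat.Primes) : 0 < 1 - (p : ℝ) ^ (-s) :=
    sub_pos.2 (rpow_neg_lt_one (one_lt_prime p) (by linarith))
  rw [log_mul (realZeta_pos hs).ne' (Finset.prod_ne_zero_iff.2 fun p _ => (hpos p).ne'),
    log_prod fun p _ => (hpos p).ne', ← exp_tsum_neg_log_euler_factor hs, log_exp,
    ← (summable_neg_log_euler_factor hs).sum_add_tsum_subtype_compl S, Finset.sum_neg_distrib,
    siftedLog]
  ring

theorem siftedLog_nonneg (S : Finset Nat.Primes) (hs : 0 < s) : 0 ≤ siftedLog S s :=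
  tsum_nonneg fun p => neg_nonneg.2 <| log_nonpos
    (sub_nonneg.2 (rpow_neg_lt_one (one_lt_prime p.1) hs).le) (sub_le_self _ (by positivity))

theorem primeZeta_le_log_realZeta (hs : 1 < s) : primeZeta s ≤ log (realZeta s) := by
  rw [← exp_tsum_neg_log_euler_factor hs, log_exp]
  refine (summable_prime_rpow_neg hs).tsum_le_tsum (fun p => ?_) (summable_neg_log_euler_factor hs)
  have hlt := rpow_neg_lt_one (one_lt_prime p) (zero_lt_one.trans hs)
  linarith [log_le_sub_one_of_pos (sub_pos.2 hlt)]

/-- The excess of `artanh q` over `q` is compared with `q ^ 3 / 3`. -/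
theorem artanh_sub_self_bounds {q : ℝ} (hq : 0 ≤ q) (hq7 : q ≤ 1 / 7) :
    -log (1 - q) - -log (1 - q ^ 2) / 2 - q ∈
      Set.Icc (-log (1 - q ^ 3) * (83 / 250)) (-log (1 - q ^ 3) * (17 / 50)) := by
  have artanh_eq : -log (1 - q) - -log (1 - q ^ 2) / 2 = 1 / 2 * log ((1 + q) / (1 - q)) := by
    rw [log_div (by linarith) (by linarith), show 1 - q ^ 2 = (1 - q) * (1 + q) by ring,
      log_mul (by linarith) (by linarith)]
    ring
  have lower := sum_range_le_log_div hq (by linarith) 2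
  have upper := log_div_le_sum_range_add hq (by linarith) 3
  norm_num [Finset.sum_range_succ] at lower upper
  have h2 : q ^ 2 ≤ 1 / 49 := by nlinarith
  have h3 : q ^ 3 ≤ 1 / 343 := by nlinarith
  have hq3 : 0 ≤ q ^ 3 := by positivity
  have hlog : q ^ 3 ≤ -log (1 - q ^ 3) := by
    linarith [log_le_sub_one_of_pos (show 0 < 1 - q ^ 3 by linarith)]
  have hlog' : -log (1 - q ^ 3) * (342 / 343) ≤ q ^ 3 := by
    have h := one_sub_inv_le_log_of_pos (show 0 < 1 - q ^ 3 by linarith)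
    have hinv : (1 - q ^ 3) * (1 - q ^ 3)⁻¹ = 1 := mul_inv_cancel₀ (by linarith)
    nlinarith
  have tail : q ^ 7 / (1 - q ^ 2) ≤ q ^ 3 / 2352 := by
    rw [div_le_div_iff₀ (by linarith) (by norm_num)]
    nlinarith [mul_nonneg hq3 (sq_nonneg q)]
  have h5 : q ^ 5 ≤ q ^ 3 / 49 := by nlinarith
  rw [artanh_eq, Set.mem_Icc]
  constructor <;> linarith

theorem primeZeta_sieve_defect_mem_Icc {S : Finset Nat.Primes} (hS : ∀ p ∉ S, 7 ≤ (p : ℕ))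
    (hs : 1 < s) :
    ∑ p ∈ S, (p : ℝ) ^ (-s) + siftedLog S s - siftedLog S (2 * s) / 2 - primeZeta s ∈
      Set.Icc (siftedLog S (3 * s) * (83 / 250)) (siftedLog S (3 * s) * (17 / 50)) := by
  have hlog {r : ℝ} (hr : 1 < r) :
      HasSum (fun p : {p // p ∉ S} => -log (1 - (p.1 : ℝ) ^ (-r))) (siftedLog S r) :=
    ((summable_neg_log_euler_factor hr).comp_injective Subtype.val_injective).hasSum
  have hprime := ((summable_prime_rpow_neg hs).comp_injective
    (Subtype.val_injective (p := (· ∉ S)))).hasSum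
  have hdefect := ((hlog hs).sub ((hlog (r := 2 * s) (by linarith)).div_const 2)).sub hprime
  have hcube := hlog (r := 3 * s) (by linarith)
  have hsmall (p : {p // p ∉ S}) : (p.1 : ℝ) ^ (-s) ≤ 1 / 7 := calc
    (p.1 : ℝ) ^ (-s) ≤ (p.1 : ℝ) ^ (-1 : ℝ) :=
      rpow_le_rpow_of_exponent_le (one_lt_prime p.1).le (by linarith)
    _ ≤ 1 / 7 := by
      rw [rpow_neg_one, ← one_div]
      exact one_div_le_one_div_of_le (by norm_num) (by exact_mod_cast hS p.1 p.2)
  have hbound (p : {p // p ∉ S}) := artanh_sub_self_bounds (by positivity) (hsmall p)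
  have hpow (p : {p // p ∉ S}) (n : ℕ) : ((p.1 : ℝ) ^ (-s)) ^ n = (p.1 : ℝ) ^ (-(n * s)) := by
    rw [← rpow_mul_natCast (by positivity)]
    ring_nf
  simp only [hpow, Nat.cast_ofNat] at hbound
  rw [primeZeta, ← (summable_prime_rpow_neg hs).sum_add_tsum_subtype_compl S]
  have lower := hasSum_le (fun p => (hbound p).1) (hcube.mul_right _) hdefect
  have upper := hasSum_le (fun p => (hbound p).2) hdefect (hcube.mul_right _)
  simp only [Function.comp_def] at lower upper
  rw [Set.mem_Icc]
  constructor <;> linarith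

end Sieve

/-- The primes `2, 3, 5`, which are removed from the Euler product. -/
def smallPrimes : Finset Nat.Primes := Finset.subtype Nat.Prime {2, 3, 5}

theorem seven_le_of_notMem_smallPrimes {p : Nat.Primes} (hp : p ∉ smallPrimes) : 7 ≤ (p : ℕ) := by
  by_contra! hlt
  have hprime := p.2
  have hmem : (p : ℕ) ∉ ({2, 3, 5} : Finset ℕ) := fun h => hp (Finset.mem_subtype.2 h)
  interval_cases (p : ℕ) <;> revert hprime hmem <;> decide

@[to_additive]
theorem prod_smallPrimes {M : Type*} [CommMonoid M] (f : ℕ → M) :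
    ∏ p ∈ smallPrimes, f p = f 2 * f 3 * f 5 := by
  refine (Finset.prod_subtype_of_mem f (by decide)).trans ?_
  rw [Finset.prod_insert (by decide), Finset.prod_insert (by decide), Finset.prod_singleton,
    mul_assoc]

theorem isExpSum_primeZeta : IsExpSum 1 primeZeta := by
  refine ⟨Nat.Primes, inferInstance, fun _ => 1, fun p => log p, fun _ => zero_le_one,
    fun p => log_pos (one_lt_prime p), fun s hs => ?_⟩
  refine (summable_prime_rpow_neg hs).hasSum.congr_fun fun p => ?_
  rw [rpow_def_of_pos (zero_lt_one.trans (one_lt_prime p)), one_mul, mul_neg]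

/-- The sum of `n^{-s}` over the products `n` of two primes. -/
noncomputable def semiprimeZeta (s : ℝ) : ℝ := (primeZeta s ^ 2 + primeZeta (2 * s)) / 2

theorem isExpSum_semiprimeZeta : IsExpSum 1 semiprimeZeta := by
  have hdouble : IsExpSum 1 fun s => primeZeta (2 * s) :=
    (isExpSum_primeZeta.mono (by norm_num)).comp_const_mul two_pos
  have h := ((isExpSum_primeZeta.mul isExpSum_primeZeta).add hdouble).const_mul one_half_pos.le
  refine (funext fun s => ?_ : _ = semiprimeZeta) ▸ h
  rw [semiprimeZeta]
  ring

/-! ### Euler–Maclaurin summation of the zeta function -/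

section EulerMaclaurin

open Filter Topology

theorem sub_le_sub_of_hasDerivAt_le {u v u' v' : ℝ → ℝ} {a b : ℝ} (hab : a ≤ b)
    (hu : ∀ y ∈ Set.Icc a b, HasDerivAt u (u' y) y) (hv : ∀ y ∈ Set.Icc a b, HasDerivAt v (v' y) y)
    (h : ∀ y ∈ Set.Icc a b, u' y ≤ v' y) : u b - u a ≤ v b - v a := by
  have hd (y) (hy : y ∈ Set.Icc a b) : HasDerivAt (fun y => v y - u y) (v' y - u' y) y :=
    (hv y hy).sub (hu y hy)
  have hmono : MonotoneOn (fun y => v y - u y) (Set.Icc a b) :=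
    monotoneOn_of_deriv_nonneg (convex_Icc a b)
      (fun y hy => (hd y hy).continuousAt.continuousWithinAt)
      (fun y hy => (hd y (interior_subset hy)).differentiableAt.differentiableWithinAt)
      fun y hy => (hd y (interior_subset hy)).deriv ▸ sub_nonneg.2 (h y (interior_subset hy))
  have := hmono (Set.left_mem_Icc.2 hab) (Set.right_mem_Icc.2 hab) hab
  linarith

/-- The polynomial factors are the derivatives of `z² (1 - z)² / 24` at `z = y - x`. -/
theorem hasDerivAt_eulerMaclaurin_remainder {F f f₁ f₂ f₃ : ℝ → ℝ} {f₄ y : ℝ} (x : ℝ)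
    (hF : HasDerivAt F (f y) y) (hf : HasDerivAt f (f₁ y) y) (hf₁ : HasDerivAt f₁ (f₂ y) y)
    (hf₂ : HasDerivAt f₂ (f₃ y) y) (hf₃ : HasDerivAt f₃ f₄ y) :
    HasDerivAt (fun y => (y - x) ^ 2 * (1 - (y - x)) ^ 2 / 24 * f₃ y
      - (y - x) * (1 - (y - x)) * (1 - 2 * (y - x)) / 12 * f₂ y
      + (1 - 6 * (y - x) + 6 * (y - x) ^ 2) / 12 * f₁ y - (2 * (y - x) - 1) / 2 * f y + F y)
      ((y - x) ^ 2 * (1 - (y - x)) ^ 2 / 24 * f₄) y := by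
  have hz : HasDerivAt (fun y => y - x) 1 y := (hasDerivAt_id y).sub_const x
  have hz' : HasDerivAt (fun y => 1 - (y - x)) (-1) y := hz.const_sub 1
  convert! ((((((hz.pow 2).mul (hz'.pow 2)).div_const 24).mul hf₃).sub
    ((((hz.mul hz').mul ((hz.const_mul 2).const_sub 1)).div_const 12).mul hf₂)).add
    (((((hz.const_mul 6).const_sub 1).add ((hz.pow 2).const_mul 6)).div_const 12).mul
      hf₁)).sub ((((hz.const_mul 2).sub_const 1).div_const 2).mul hf) |>.add hF using 1
  simp only [Pi.mul_apply, Pi.pow_apply, Pi.add_apply]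
  ring

theorem eulerMaclaurin_step {F f f₁ f₂ f₃ f₄ : ℝ → ℝ} {x M : ℝ}
    (hF : ∀ y ∈ Set.Icc x (x + 1), HasDerivAt F (f y) y)
    (hf : ∀ y ∈ Set.Icc x (x + 1), HasDerivAt f (f₁ y) y)
    (hf₁ : ∀ y ∈ Set.Icc x (x + 1), HasDerivAt f₁ (f₂ y) y)
    (hf₂ : ∀ y ∈ Set.Icc x (x + 1), HasDerivAt f₂ (f₃ y) y)
    (hf₃ : ∀ y ∈ Set.Icc x (x + 1), HasDerivAt f₃ (f₄ y) y)
    (hf₄ : ∀ y ∈ Set.Icc x (x + 1), f₄ y ∈ Set.Icc 0 M) :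
    F (x + 1) - F x - (f x + f (x + 1)) / 2 + (f₁ (x + 1) - f₁ x) / 12 ∈ Set.Icc 0 (M / 720) := by
  have hremainder (y) (hy : y ∈ Set.Icc x (x + 1)) :=
    hasDerivAt_eulerMaclaurin_remainder x (hF y hy) (hf y hy) (hf₁ y hy) (hf₂ y hy) (hf₃ y hy)
  have hmajorant (y) : HasDerivAt
      (fun y => M * ((y - x) ^ 3 / 72 - (y - x) ^ 4 / 48 + (y - x) ^ 5 / 120))
      (M * ((y - x) ^ 2 * (1 - (y - x)) ^ 2 / 24)) y := by
    have hz : HasDerivAt (fun y => y - x) 1 y := (hasDerivAt_id y).sub_const x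
    convert! ((((hz.pow 3).div_const 72).sub ((hz.pow 4).div_const 48)).add
      ((hz.pow 5).div_const 120)).const_mul M using 1
    push_cast
    ring
  have hx : x ≤ x + 1 := by linarith
  have lower := sub_le_sub_of_hasDerivAt_le hx (fun y _ => hasDerivAt_const y (0 : ℝ)) hremainder
    fun y hy => mul_nonneg (by positivity) (hf₄ y hy).1
  have upper := sub_le_sub_of_hasDerivAt_le hx hremainder (fun y _ => hmajorant y) fun y hy => by
    rw [mul_comm M]
    exact mul_le_mul_of_nonneg_left (hf₄ y hy).2 (by positivity)
  ring_nf at lower upper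
  rw [Set.mem_Icc]
  ring_nf
  constructor <;> linarith

/-- The Euler–Maclaurin approximation, up to the first Bernoulli term, of `∑ n ≥ x, n^{-s}`. -/
noncomputable def zetaTail (s x : ℝ) : ℝ :=
  x ^ (1 - s) / (s - 1) + x ^ (-s) / 2 + s * x ^ (-s - 1) / 12

/-- A bound for `∑ n ≥ x, n^{-s-4}`. -/
noncomputable def zetaTailError (s x : ℝ) : ℝ := x ^ (-s - 4) + x ^ (-s - 3) / (s + 3)

variable {s x : ℝ}

theorem hasDerivAt_const_mul_rpow {y r r' c c' : ℝ} (hy : 0 < y) (hr : r' = r - 1)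
    (hc : c' = c * r) : HasDerivAt (fun y => c * y ^ r) (c' * y ^ r') y := by
  subst hr hc
  rw [mul_assoc]
  exact (hasDerivAt_rpow_const (Or.inl hy.ne')).const_mul c

theorem zetaTail_step (hs : 1 < s) (hx : 0 < x) :
    zetaTail s x - zetaTail s (x + 1) - x ^ (-s) ∈
      Set.Icc 0 (s * (s + 1) * (s + 2) * (s + 3) / 720 * x ^ (-s - 4)) := by
  have hs' : s - 1 ≠ 0 := by linarith
  have hC : 0 ≤ s * (s + 1) * (s + 2) * (s + 3) := by
    have : 0 < s := by linarith
    positivity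
  have pos {y : ℝ} (hy : y ∈ Set.Icc x (x + 1)) : 0 < y := hx.trans_le hy.1
  have step := eulerMaclaurin_step (F := fun y => -(s - 1)⁻¹ * y ^ (1 - s))
    (fun y hy => hasDerivAt_const_mul_rpow (pos hy) (r' := -s) (c' := 1) (by ring)
      (by field_simp; ring))
    (fun y hy => hasDerivAt_const_mul_rpow (pos hy) (r' := -s - 1) (c' := -s) (by ring) (by ring))
    (fun y hy => hasDerivAt_const_mul_rpow (pos hy) (r' := -s - 2) (c' := s * (s + 1))
      (by ring) (by ring))
    (fun y hy => hasDerivAt_const_mul_rpow (pos hy) (r' := -s - 3) (c' := -(s * (s + 1) * (s + 2)))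
      (by ring) (by ring))
    (fun y hy => hasDerivAt_const_mul_rpow (pos hy) (r' := -s - 4)
      (c' := s * (s + 1) * (s + 2) * (s + 3)) (by ring) (by ring))
    (fun y hy => ⟨mul_nonneg hC (rpow_nonneg (pos hy).le _), mul_le_mul_of_nonneg_left
      (rpow_le_rpow_of_nonpos hx hy.1 (by linarith)) hC⟩)
  convert! step using 1
  · ring_nf
  · unfold zetaTail
    ring

theorem rpow_le_zetaTailError_sub (hs : 1 < s) (hx : 0 < x) :
    x ^ (-s - 4) ≤ zetaTailError s x - zetaTailError s (x + 1) := by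
  have hs' : s + 3 ≠ 0 := by linarith
  have pos {y : ℝ} (hy : y ∈ Set.Icc x (x + 1)) : 0 < y := hx.trans_le hy.1
  have h := sub_le_sub_of_hasDerivAt_le (le_add_of_nonneg_right zero_le_one)
    (fun y _ => (hasDerivAt_id y).const_mul ((x + 1) ^ (-s - 4)))
    (fun y hy => hasDerivAt_const_mul_rpow (pos hy) (r := -s - 3) (r' := -s - 4)
      (c := -(s + 3)⁻¹) (c' := 1) (by ring) (by field_simp; ring))
    (fun y hy => by
      rw [mul_one, one_mul]
      exact rpow_le_rpow_of_nonpos (pos hy) hy.2 (by linarith))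
  simp only [id, mul_add, mul_one, add_sub_cancel_left] at h
  unfold zetaTailError
  linarith [h, div_eq_inv_mul (x ^ (-s - 3)) (s + 3), div_eq_inv_mul ((x + 1) ^ (-s - 3)) (s + 3)]

theorem tsum_le_of_le_sub_succ {a b : ℕ → ℝ} (ha : ∀ n, 0 ≤ a n) (hb : ∀ n, 0 ≤ b n)
    (h : ∀ n, a n ≤ b n - b (n + 1)) : ∑' n, a n ≤ b 0 := by
  refine Real.tsum_le_of_sum_range_le ha fun n => ?_
  calc ∑ i ∈ Finset.range n, a i ≤ ∑ i ∈ Finset.range n, (b i - b (i + 1)) :=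
        Finset.sum_le_sum fun i _ => h i
    _ = b 0 - b n := Finset.sum_range_sub' b n
    _ ≤ b 0 := sub_le_self _ (hb n)

theorem le_tsum_of_sub_succ_le {a b : ℕ → ℝ} (ha : Summable a) (hb : Tendsto b atTop (𝓝 0))
    (h : ∀ n, b n - b (n + 1) ≤ a n) : b 0 ≤ ∑' n, a n := by
  have hlim := hb.const_sub (b 0)
  rw [sub_zero] at hlim
  refine le_of_tendsto_of_tendsto' hlim ha.hasSum.tendsto_sum_nat fun n => ?_
  exact (Finset.sum_range_sub' b n).symm.trans_le (Finset.sum_le_sum fun i _ => h i)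

theorem zetaTail_nonneg (hs : 1 < s) (hx : 0 ≤ x) : 0 ≤ zetaTail s x := by
  have : 0 < s - 1 := sub_pos.2 hs
  unfold zetaTail
  positivity

theorem tendsto_zetaTail (hs : 1 < s) : Tendsto (zetaTail s) atTop (𝓝 0) := by
  have h₁ := (tendsto_rpow_neg_atTop (y := s - 1) (by linarith)).div_const (s - 1)
  have h₂ := (tendsto_rpow_neg_atTop (y := s) (by linarith)).div_const 2
  have h₃ := ((tendsto_rpow_neg_atTop (y := s + 1) (by linarith)).const_mul s).div_const 12
  unfold zetaTail
  simpa [sub_eq_add_neg, add_comm] using (h₁.add h₂).add h₃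

theorem tendsto_zetaTailError (hs : 1 < s) : Tendsto (zetaTailError s) atTop (𝓝 0) := by
  have h₁ := tendsto_rpow_neg_atTop (y := s + 4) (by linarith)
  have h₂ := (tendsto_rpow_neg_atTop (y := s + 3) (by linarith)).div_const (s + 3)
  unfold zetaTailError
  simpa [sub_eq_add_neg, add_comm] using h₁.add h₂

theorem realZeta_bounds {N : ℕ} (hN : 0 < N) (hs : 1 < s) :
    (∑ n ∈ Finset.range N, (n : ℝ) ^ (-s)) + zetaTail s N - realZeta s ∈
      Set.Icc 0 (s * (s + 1) * (s + 2) * (s + 3) / 720 * zetaTailError s N) := by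
  have hsum := (summable_nat_add_iff N).2 (summable_nat_rpow_neg hs)
  have hpos (n : ℕ) : (0 : ℝ) < n + N := by positivity
  have hcast (n : ℕ) : ((n + 1 : ℕ) : ℝ) + N = n + N + 1 := by push_cast; ring
  have step (n : ℕ) := zetaTail_step hs (hpos n)
  set C := s * (s + 1) * (s + 2) * (s + 3) / 720
  have hC : 0 ≤ C := by
    have : 0 < s := by linarith
    positivity
  have hlim : Tendsto (fun n : ℕ => (n : ℝ) + N) atTop atTop :=
    tendsto_atTop_add_const_right _ _ tendsto_natCast_atTop_atTop
  have tail_lim : Tendsto (fun n : ℕ => zetaTail s (n + N) - C * zetaTailError s (n + N)) atTop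
      (𝓝 0) := by
    simpa using ((tendsto_zetaTail hs).comp hlim).sub
      (((tendsto_zetaTailError hs).comp hlim).const_mul C)
  have upper := tsum_le_of_le_sub_succ (b := fun n : ℕ => zetaTail s (n + N))
    (fun n => rpow_nonneg (Nat.cast_nonneg (n + N)) (-s))
    (fun n => zetaTail_nonneg hs (hpos n).le) fun n => by
      rw [hcast]
      push_cast
      linarith [(step n).1]
  have lower := le_tsum_of_sub_succ_le hsum tail_lim fun n => by
      rw [hcast]
      push_cast
      linarith [(step n).2, mul_le_mul_of_nonneg_left (rpow_le_zetaTailError_sub hs (hpos n)) hC]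
  simp only [Nat.cast_zero, zero_add] at upper lower
  rw [realZeta, ← (summable_nat_rpow_neg hs).sum_add_tsum_nat_add N, Set.mem_Icc]
  constructor <;> linarith

theorem realZeta_le_two_div (hs : 1 < s) (hs2 : s ≤ 2) : realZeta s ≤ 2 / (s - 1) := by
  have h := (realZeta_bounds one_pos hs).1
  have hzero : (0 : ℝ) ^ (-s) = 0 := zero_rpow (by linarith)
  have hpos : 0 < s - 1 := sub_pos.2 hs
  norm_num [zetaTail, hzero] at h
  have : 1 ≤ 1 / (s - 1) := (one_le_div hpos).2 (by linarith)
  rw [← one_div] at h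
  rw [← mul_one_div]
  linarith

theorem six_rpow_neg_sub (s : ℝ) (k : ℕ) :
    (6 : ℝ) ^ (-s - k) = 2 ^ (-s) * 3 ^ (-s) / 6 ^ k := by
  rw [rpow_sub_natCast (by norm_num), ← mul_rpow (by norm_num) (by norm_num)]
  norm_num

theorem realZeta_bounds_six (hs : 1 < s) {a b c q : ℝ} (ha : a = 2 ^ (-s)) (hb : b = 3 ^ (-s))
    (hc : c = 5 ^ (-s)) (hq : q = a * b) :
    1 + a + b + a ^ 2 + c + 6 * q / (s - 1) + q / 2 + s * q / 72 - realZeta s ∈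
      Set.Icc 0 (s * (s + 1) * (s + 2) * (s + 9) * q / 933120) := by
  have four : (4 : ℝ) ^ (-s) = a ^ 2 := by
    rw [ha, sq, ← mul_rpow (by norm_num) (by norm_num)]
    norm_num
  have six (k : ℕ) : (6 : ℝ) ^ (-s - k) = q / 6 ^ k := by rw [six_rpow_neg_sub, hq, ha, hb]
  have six₀ : (6 : ℝ) ^ (-s) = q := by simpa using six 0
  have six' : (6 : ℝ) ^ (1 - s) = 6 * q := by
    rw [sub_eq_add_neg, rpow_add (by norm_num), rpow_one, six₀]
  have six₁ := six 1
  have six₃ := six 3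
  have six₄ := six 4
  push_cast at six₁ six₃ six₄
  convert! realZeta_bounds (N := 6) (by norm_num) hs using 2
  · simp only [zetaTailError, Nat.cast_ofNat, six₃, six₄]
    have : s + 3 ≠ 0 := by linarith
    field_simp
    ring
  · simp only [zetaTail, Nat.cast_ofNat, six₀, six₁, six', Finset.sum_range_succ,
      Finset.sum_range_zero, Nat.cast_zero, Nat.cast_one, one_rpow, four, ← ha, ← hb, ← hc,
      zero_rpow (show -s ≠ 0 by linarith)]
    ring

end EulerMaclaurin

/-! ### Comparison of the two zeta functions -/

section PrimeZeta

variable {s r : ℝ}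

theorem primeZeta_pos (hs : 1 < s) : 0 < primeZeta s :=
  (summable_prime_rpow_neg hs).tsum_pos (fun p => by positivity) ⟨2, Nat.prime_two⟩ (by positivity)

theorem primeZeta_lt_primeZeta (hs : 1 < s) (hsr : s < r) : primeZeta r < primeZeta s := by
  have hlt (p : Nat.Primes) : (p : ℝ) ^ (-r) < (p : ℝ) ^ (-s) :=
    rpow_lt_rpow_of_exponent_lt (one_lt_prime p) (neg_lt_neg hsr)
  exact (summable_prime_rpow_neg (hs.trans hsr)).tsum_lt_tsum (fun p => (hlt p).le)
    (hlt ⟨2, Nat.prime_two⟩) (summable_prime_rpow_neg hs)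

theorem primeZeta_two_mul_le_sq (hs : 1 < s) : primeZeta (2 * s) ≤ primeZeta s ^ 2 := by
  have hsum := summable_prime_rpow_neg hs
  have hterm (p : Nat.Primes) : (p : ℝ) ^ (-(2 * s)) ≤ primeZeta s * (p : ℝ) ^ (-s) := by
    rw [show -(2 * s) = -s + -s by ring, rpow_add (zero_lt_one.trans (one_lt_prime p))]
    gcongr
    exact hsum.le_tsum p fun q _ => by positivity
  calc primeZeta (2 * s) ≤ ∑' p : Nat.Primes, primeZeta s * (p : ℝ) ^ (-s) :=
        (summable_prime_rpow_neg (by linarith)).tsum_le_tsum hterm (hsum.mul_left _)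
    _ = primeZeta s ^ 2 := by rw [tsum_mul_left, ← primeZeta, sq]

theorem primeZeta_le_rpow {ε : ℝ} (hε : 0 < ε) (hs : 1 < s) (hs2 : s ≤ 2) :
    primeZeta s ≤ (2 / (s - 1)) ^ ε / ε :=
  (primeZeta_le_log_realZeta hs).trans <|
    (log_le_log (realZeta_pos hs) (realZeta_le_two_div hs hs2)).trans <|
      log_le_rpow_div (div_pos two_pos (sub_pos.2 hs)).le hε

theorem primeZeta_two_le_one : primeZeta 2 ≤ 1 := by
  have hlog := log_le_log (realZeta_pos one_lt_two) (realZeta_le_two_div one_lt_two le_rfl)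
  norm_num at hlog
  linarith [primeZeta_le_log_realZeta one_lt_two, log_two_lt_d9]

theorem primeZeta_le_exp (hs : 2 ≤ s) : primeZeta s ≤ exp ((2 - s) / 2) := by
  have hterm (p : Nat.Primes) : (p : ℝ) ^ (-s) ≤ (p : ℝ) ^ (-2 : ℝ) * 2 ^ (2 - s) := by
    have hp : (0 : ℝ) < p := zero_lt_one.trans (one_lt_prime p)
    rw [show -s = -2 + (2 - s) by ring, rpow_add hp]
    gcongr ?_ * ?_
    exact rpow_le_rpow_of_nonpos two_pos (by exact_mod_cast p.2.two_le) (by linarith)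
  calc primeZeta s ≤ primeZeta 2 * 2 ^ (2 - s) := by
        rw [primeZeta, primeZeta, ← tsum_mul_right]
        exact (summable_prime_rpow_neg (by linarith)).tsum_le_tsum hterm
          ((summable_prime_rpow_neg one_lt_two).mul_right _)
    _ ≤ 1 * exp ((2 - s) / 2) := by
        rw [rpow_def_of_pos two_pos]
        gcongr
        · exact primeZeta_two_le_one
        · nlinarith [log_two_gt_d9]
    _ = exp ((2 - s) / 2) := one_mul _

theorem primeZeta_le_one (hs : 2 ≤ s) : primeZeta s ≤ 1 :=
  (primeZeta_le_exp hs).trans (exp_le_one_iff.2 (by linarith))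

theorem semiprimeZeta_lt_primeZeta (hs : 2 ≤ s) : semiprimeZeta s < primeZeta s := by
  have hs1 : 1 < s := by linarith
  have hlt : primeZeta (2 * s) < primeZeta s := primeZeta_lt_primeZeta hs1 (by linarith)
  rw [semiprimeZeta]
  nlinarith [primeZeta_pos hs1, primeZeta_le_one hs]

theorem semiprimeZeta_lt_primeZeta_of_le (hs : 1 < s) (hsr : s < r)
    (h : semiprimeZeta s ≤ primeZeta s) : semiprimeZeta r < primeZeta r := by
  have hr := hs.trans hsr
  have hP := primeZeta_pos hs
  have hP' := primeZeta_pos hr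
  have hlt := primeZeta_lt_primeZeta hs hsr
  have hlt2 : primeZeta (2 * r) < primeZeta (2 * s) :=
    primeZeta_lt_primeZeta (by linarith) (by linarith)
  have hsq := primeZeta_two_mul_le_sq hr
  rw [semiprimeZeta] at h ⊢
  have hcross : primeZeta s * (primeZeta r ^ 2 + primeZeta (2 * r)) <
      primeZeta r * (primeZeta s ^ 2 + primeZeta (2 * s)) := calc
    primeZeta s * (primeZeta r ^ 2 + primeZeta (2 * r))
        = primeZeta s * primeZeta r ^ 2 + primeZeta r * primeZeta (2 * r) +
          (primeZeta s - primeZeta r) * primeZeta (2 * r) := by ring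
    _ ≤ primeZeta s * primeZeta r ^ 2 + primeZeta r * primeZeta (2 * r) +
          (primeZeta s - primeZeta r) * primeZeta r ^ 2 := by gcongr
    _ = primeZeta r * (primeZeta s ^ 2 + primeZeta (2 * r)) -
          primeZeta r * (primeZeta s - primeZeta r) ^ 2 := by ring
    _ ≤ primeZeta r * (primeZeta s ^ 2 + primeZeta (2 * r)) := sub_le_self _ (by positivity)
    _ < primeZeta r * (primeZeta s ^ 2 + primeZeta (2 * s)) := by gcongr
  nlinarith

theorem exists_semiprimeZeta_sign_change : ∃ s₀, 1 ≤ s₀ ∧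
    (∀ s, s₀ < s → semiprimeZeta s < primeZeta s) ∧
    ∀ s, 1 < s → s < s₀ → primeZeta s ≤ semiprimeZeta s := by
  let S : Set ℝ := {s | 1 < s ∧ semiprimeZeta s < primeZeta s}
  have hne : S.Nonempty := ⟨2, one_lt_two, semiprimeZeta_lt_primeZeta le_rfl⟩
  refine ⟨sInf S, le_csInf hne fun s hs => hs.1.le, fun s hs => ?_, fun s hs1 hs => ?_⟩
  · obtain ⟨r, hr, hrs⟩ := exists_lt_of_csInf_lt hne hs
    exact semiprimeZeta_lt_primeZeta_of_le hr.1 hrs hr.2.le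
  · by_contra! hlt
    exact notMem_of_lt_csInf hs ⟨1, fun r hr => hr.1.le⟩ ⟨hs1, hlt⟩

end PrimeZeta

/-! ### Integrals of sums of exponentials -/

/-- A nonnegative sum of exponentials on `s > 1` whose singularity at `1` and decay at infinity are
controlled by explicit integrable bounds, so that truncating its integral costs an explicit error.
The constant `24` exceeds `16 √2`, which suffices for `semiprimeZeta`. -/
structure IsTameExpSum (F : ℝ → ℝ) : Prop where
  isExpSum : IsExpSum 1 F
  near {s : ℝ} : 1 < s → s ≤ 2 → F s ≤ 24 * (s - 1) ^ (-(1 / 2) : ℝ)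
  far {s : ℝ} : 2 ≤ s → F s ≤ exp ((2 - s) / 2)

theorem isTameExpSum_primeZeta : IsTameExpSum primeZeta where
  isExpSum := isExpSum_primeZeta
  near {s} hs hs2 := by
    have hsqrt : (2 : ℝ) ^ (1 / 2 : ℝ) ≤ 2 := by
      simpa only [rpow_one] using
        rpow_le_rpow_of_exponent_le one_le_two (by norm_num : (1 / 2 : ℝ) ≤ 1)
    have hu : 0 < s - 1 := sub_pos.2 hs
    calc primeZeta s ≤ (2 / (s - 1)) ^ (1 / 2 : ℝ) / (1 / 2) :=
          primeZeta_le_rpow one_half_pos hs hs2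
      _ = 2 * 2 ^ (1 / 2 : ℝ) * (s - 1) ^ (-(1 / 2) : ℝ) := by
          rw [div_rpow two_pos.le hu.le, rpow_neg hu.le]
          ring
      _ ≤ 24 * (s - 1) ^ (-(1 / 2) : ℝ) := by gcongr; linarith
  far := primeZeta_le_exp

theorem isTameExpSum_semiprimeZeta : IsTameExpSum semiprimeZeta where
  isExpSum := isExpSum_semiprimeZeta
  near {s} hs hs2 := by
    have hsqrt : (2 : ℝ) ^ (1 / 2 : ℝ) ≤ 3 / 2 := by
      rw [← sqrt_eq_rpow, sqrt_le_left (by norm_num)]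
      norm_num
    have hu : 0 < s - 1 := sub_pos.2 hs
    calc semiprimeZeta s ≤ primeZeta s ^ 2 := by
          rw [semiprimeZeta]
          linarith [primeZeta_two_mul_le_sq hs]
      _ ≤ ((2 / (s - 1)) ^ (1 / 4 : ℝ) / (1 / 4)) ^ 2 :=
          pow_le_pow_left₀ (primeZeta_pos hs).le (primeZeta_le_rpow (by norm_num) hs hs2) 2
      _ = 16 * 2 ^ (1 / 2 : ℝ) * (s - 1) ^ (-(1 / 2) : ℝ) := by
          rw [div_pow, ← rpow_mul_natCast (by positivity),
            show (1 / 4 : ℝ) * (2 : ℕ) = 1 / 2 by norm_num, div_rpow two_pos.le hu.le,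
            rpow_neg hu.le]
          ring
      _ ≤ 24 * (s - 1) ^ (-(1 / 2) : ℝ) := by gcongr; linarith
  far hs := (semiprimeZeta_lt_primeZeta hs).le.trans (primeZeta_le_exp hs)

section Integrals

variable {c k r x : ℝ}

theorem exp_sub_div_eq (c k s : ℝ) : exp ((c - s) / k) = exp (c / k) * exp (-k⁻¹ * s) := by
  rw [← exp_add]
  ring_nf

theorem integrableOn_exp_sub_div (hk : 0 < k) (c y : ℝ) :
    IntegrableOn (fun s => exp ((c - s) / k)) (Set.Ioi y) := by
  simp only [exp_sub_div_eq]
  exact (integrableOn_exp_mul_Ioi (neg_lt_zero.2 (inv_pos.2 hk)) y).const_mul _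

theorem integral_exp_sub_div (hk : 0 < k) (c y : ℝ) :
    ∫ s in Set.Ioi y, exp ((c - s) / k) = k * exp ((c - y) / k) := by
  simp only [exp_sub_div_eq, integral_const_mul,
    integral_exp_mul_Ioi (neg_lt_zero.2 (inv_pos.2 hk))]
  field_simp

theorem integrableOn_sub_rpow (hr : -1 < r) (hcx : c ≤ x) :
    IntegrableOn (fun s : ℝ => (s - c) ^ r) (Set.Ioc c x) := by
  have hint := (intervalIntegral.intervalIntegrable_rpow' (a := 0) (b := x - c) hr).comp_sub_right c
  rw [zero_add, sub_add_cancel] at hint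
  exact (intervalIntegrable_iff_integrableOn_Ioc_of_le hcx).1 hint

theorem integral_sub_rpow (hr : -1 < r) (hcx : c ≤ x) :
    ∫ s in Set.Ioc c x, (s - c) ^ r = (x - c) ^ (r + 1) / (r + 1) := by
  rw [← intervalIntegral.integral_of_le hcx,
    intervalIntegral.integral_comp_sub_right (fun u : ℝ => u ^ r), integral_rpow (Or.inl hr),
    sub_self, zero_rpow (by linarith), sub_zero]

theorem integral_Ioi_eq_add_add {F : ℝ → ℝ} {a x y : ℝ} (hF : IntegrableOn F (Set.Ioi a))
    (hx : a ≤ x) (hxy : x ≤ y) :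
    ∫ s in Set.Ioi a, F s =
      (∫ s in Set.Ioc a x, F s) + ((∫ s in x..y, F s) + ∫ s in Set.Ioi y, F s) := by
  have hF' := hF.mono_set (Set.Ioi_subset_Ioi hx)
  rw [← Set.Ioc_union_Ioi_eq_Ioi hx, setIntegral_union Set.Ioc_disjoint_Ioi_same measurableSet_Ioi
      (hF.mono_set Set.Ioc_subset_Ioi_self) hF',
    ← Set.Ioc_union_Ioi_eq_Ioi hxy, setIntegral_union Set.Ioc_disjoint_Ioi_same measurableSet_Ioi
      (hF'.mono_set Set.Ioc_subset_Ioi_self) (hF'.mono_set (Set.Ioi_subset_Ioi hxy)),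
    intervalIntegral.integral_of_le hxy]

end Integrals

namespace IsTameExpSum

variable {F : ℝ → ℝ} {x y : ℝ}

theorem mul_exp (hF : IsTameExpSum F) {t : ℝ} (ht : 0 ≤ t) :
    IsTameExpSum fun s => F s * exp ((1 - s) * t) := by
  have hle {s : ℝ} (hs : 1 < s) : F s * exp ((1 - s) * t) ≤ F s :=
    mul_le_of_le_one_right (hF.isExpSum.nonneg hs)
      (exp_le_one_iff.2 (mul_nonpos_of_nonpos_of_nonneg (by linarith) ht))
  exact ⟨hF.isExpSum.mul_exp ht, fun hs hs2 => (hle hs).trans (hF.near hs hs2),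
    fun hs => (hle (by linarith)).trans (hF.far hs)⟩

theorem aestronglyMeasurable (hF : IsTameExpSum F) :
    AEStronglyMeasurable F (volume.restrict (Set.Ioi 1)) :=
  (aemeasurable_restrict_of_antitoneOn measurableSet_Ioi
    hF.isExpSum.antitoneOn).aestronglyMeasurable

theorem integrableOn (hF : IsTameExpSum F) : IntegrableOn F (Set.Ioi 1) := by
  rw [← Set.Ioc_union_Ioi_eq_Ioi one_le_two]
  refine IntegrableOn.union ?_ ?_
  · have hint : IntegrableOn (fun s : ℝ => (s - 1) ^ (-(1 / 2) : ℝ)) (Set.Ioc 1 2) :=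
      integrableOn_sub_rpow (by norm_num) one_le_two
    refine (hint.const_mul 24).mono' (hF.aestronglyMeasurable.mono_set Set.Ioc_subset_Ioi_self) ?_
    filter_upwards [ae_restrict_mem measurableSet_Ioc] with s hs
    rw [norm_of_nonneg (hF.isExpSum.nonneg hs.1)]
    exact hF.near hs.1 hs.2
  · refine (integrableOn_exp_sub_div two_pos 2 2).mono'
      (hF.aestronglyMeasurable.mono_set (Set.Ioi_subset_Ioi one_le_two)) ?_
    filter_upwards [ae_restrict_mem measurableSet_Ioi] with s hs
    rw [norm_of_nonneg (hF.isExpSum.nonneg (one_lt_two.trans hs))]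
    exact hF.far (le_of_lt hs)

theorem intervalIntegral_le (hF : IsTameExpSum F) (hx : 1 ≤ x) (hxy : x ≤ y) :
    ∫ s in x..y, F s ≤ ∫ s in Set.Ioi 1, F s := by
  rw [intervalIntegral.integral_of_le hxy]
  refine setIntegral_mono_set hF.integrableOn ?_
    (Set.Ioc_subset_Ioi_self.trans (Set.Ioi_subset_Ioi hx)).eventuallyLE
  filter_upwards [ae_restrict_mem measurableSet_Ioi] with s hs
  exact hF.isExpSum.nonneg hs

theorem integral_le_intervalIntegral_add (hF : IsTameExpSum F) (hx : 1 ≤ x) (hx2 : x ≤ 2)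
    (hy : 2 ≤ y) :
    ∫ s in Set.Ioi 1, F s ≤
      (∫ s in x..y, F s) + (48 * √(x - 1) + 2 * exp ((2 - y) / 2)) := by
  have hnear : ∫ s in Set.Ioc 1 x, F s ≤ 48 * √(x - 1) := calc
    ∫ s in Set.Ioc 1 x, F s ≤ ∫ s in Set.Ioc 1 x, 24 * (s - 1) ^ (-(1 / 2) : ℝ) :=
      setIntegral_mono_on (hF.integrableOn.mono_set Set.Ioc_subset_Ioi_self)
        ((integrableOn_sub_rpow (by norm_num) hx).const_mul 24) measurableSet_Ioc
        fun s hs => hF.near hs.1 (hs.2.trans hx2)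
    _ = 48 * √(x - 1) := by
      rw [integral_const_mul, integral_sub_rpow (by norm_num) hx, sqrt_eq_rpow]
      norm_num
      ring
  have hfar : ∫ s in Set.Ioi y, F s ≤ 2 * exp ((2 - y) / 2) := by
    rw [← integral_exp_sub_div two_pos]
    exact setIntegral_mono_on (hF.integrableOn.mono_set (Set.Ioi_subset_Ioi (by linarith)))
      (integrableOn_exp_sub_div two_pos 2 y) measurableSet_Ioi
      fun s hs => hF.far (hy.trans (le_of_lt hs))
  rw [integral_Ioi_eq_add_add hF.integrableOn hx (hx2.trans hy)]
  linarith

end IsTameExpSum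

/-- The Laplace transform of the restriction of `f` to `s > σ`, with the origin moved to `σ`. -/
noncomputable def laplaceFrom (σ : ℝ) (f : ℝ → ℝ) (t : ℝ) : ℝ :=
  ∫ s in Set.Ioi σ, f s * exp ((σ - s) * t)

section Laplace

variable {σ : ℝ} {f g : ℝ → ℝ}

theorem norm_mul_exp_le {s t : ℝ} (hs : σ < s) (ht : 0 ≤ t) :
    ‖f s * exp ((σ - s) * t)‖ ≤ ‖f s‖ := by
  rw [norm_mul, norm_of_nonneg (exp_pos _).le]
  exact mul_le_of_le_one_right (norm_nonneg _)
    (exp_le_one_iff.2 (mul_nonpos_of_nonpos_of_nonneg (by linarith) ht))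

theorem integrableOn_mul_exp (hf : IntegrableOn f (Set.Ioi σ)) {t : ℝ} (ht : 0 ≤ t) :
    IntegrableOn (fun s => f s * exp ((σ - s) * t)) (Set.Ioi σ) := by
  refine hf.norm.mono' (hf.aestronglyMeasurable.mul
    (Continuous.aestronglyMeasurable (by fun_prop))) ?_
  filter_upwards [ae_restrict_mem measurableSet_Ioi] with s hs using norm_mul_exp_le hs ht

theorem laplaceFrom_sub (hf : IntegrableOn f (Set.Ioi σ)) (hg : IntegrableOn g (Set.Ioi σ)) {t : ℝ}
    (ht : 0 ≤ t) :
    laplaceFrom σ (f - g) t = laplaceFrom σ f t - laplaceFrom σ g t := by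
  simp only [laplaceFrom, Pi.sub_apply, sub_mul (f _)]
  exact integral_sub (integrableOn_mul_exp hf ht) (integrableOn_mul_exp hg ht)

theorem continuousOn_laplaceFrom (hf : IntegrableOn f (Set.Ioi σ)) :
    ContinuousOn (laplaceFrom σ f) (Set.Ici 0) := by
  refine continuousOn_of_dominated (bound := fun s => ‖f s‖)
    (fun t ht => (integrableOn_mul_exp hf ht).aestronglyMeasurable) (fun t ht => ?_) hf.norm
    (.of_forall fun s => by fun_prop)
  filter_upwards [ae_restrict_mem measurableSet_Ioi] with s hs using norm_mul_exp_le hs ht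

theorem strictAntiOn_exp_mul_laplaceFrom (hf : IntegrableOn f (Set.Ioi σ)) {s₀ : ℝ} (hs₀ : σ ≤ s₀)
    (hpos : ∀ s, s₀ < s → 0 < f s) (hneg : ∀ s, σ < s → s < s₀ → f s ≤ 0) :
    StrictAntiOn (fun t => exp ((s₀ - σ) * t) * laplaceFrom σ f t) (Set.Ici 0) := by
  intro t ht u hu htu
  let d (s : ℝ) : ℝ := f s * (exp ((s₀ - s) * t) - exp ((s₀ - s) * u))
  have hd : d = fun s => exp ((s₀ - σ) * t) * (f s * exp ((σ - s) * t)) -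
      exp ((s₀ - σ) * u) * (f s * exp ((σ - s) * u)) := by
    ext s
    simp only [d]
    rw [show (s₀ - s) * t = (s₀ - σ) * t + (σ - s) * t by ring,
      show (s₀ - s) * u = (s₀ - σ) * u + (σ - s) * u by ring, exp_add, exp_add]
    ring
  have ht_int := (integrableOn_mul_exp hf ht).const_mul (exp ((s₀ - σ) * t))
  have hu_int := (integrableOn_mul_exp hf hu).const_mul (exp ((s₀ - σ) * u))
  have hd_pos {s : ℝ} (hs : s₀ < s) : 0 < d s :=
    mul_pos (hpos s hs) (sub_pos.2 (exp_lt_exp.2 (by nlinarith)))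
  have hd_nonneg {s : ℝ} (hs : σ < s) : 0 ≤ d s := by
    rcases lt_trichotomy s s₀ with h | rfl | h
    · exact mul_nonneg_of_nonpos_of_nonpos (hneg s hs h)
        (sub_nonpos.2 (exp_le_exp.2 (by nlinarith)))
    · simp [d]
    · exact (hd_pos h).le
  have hint : IntegrableOn d (Set.Ioi σ) := hd ▸ ht_int.sub hu_int
  have hsupport : Set.Ioi s₀ ⊆ Function.support d ∩ Set.Ioi σ := fun s hs =>
    ⟨(hd_pos hs).ne', hs₀.trans_lt hs⟩
  have hlt : 0 < ∫ s in Set.Ioi σ, d s := by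
    refine (setIntegral_pos_iff_support_of_nonneg_ae ?_ hint).2
      (lt_of_lt_of_le (by simp) (measure_mono hsupport))
    filter_upwards [ae_restrict_mem measurableSet_Ioi] with s hs using hd_nonneg hs
  rw [hd, integral_sub ht_int hu_int, integral_const_mul, integral_const_mul] at hlt
  exact sub_pos.1 hlt

end Laplace

theorem existsUnique_zero_of_strictAntiOn_mul {I g : ℝ → ℝ} {a b : ℝ} (ha : 0 ≤ a) (hab : a ≤ b)
    (hI : ContinuousOn I (Set.Ici 0)) (hg : ∀ t, 0 < g t)
    (hanti : StrictAntiOn (fun t => g t * I t) (Set.Ici 0)) (hIa : 0 < I a) (hIb : I b < 0) :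
    (∃! t, 0 ≤ t ∧ I t = 0) ∧ ∀ t, 0 ≤ t → I t = 0 → a < t ∧ t < b := by
  obtain ⟨t, ht, htI⟩ := intermediate_value_Icc' hab
    (hI.mono fun t ht => ha.trans ht.1) ⟨hIb.le, hIa.le⟩
  refine ⟨⟨t, ⟨ha.trans ht.1, htI⟩, fun u hu => hanti.injOn hu.1 (ha.trans ht.1) ?_⟩,
    fun u hu huI => ⟨?_, ?_⟩⟩
  · simp only [hu.2, htI, mul_zero]
  · refine (hanti.lt_iff_gt hu ha).1 ?_
    simpa only [huI, mul_zero] using mul_pos (hg a) hIa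
  · refine (hanti.lt_iff_gt (ha.trans hab) hu).1 ?_
    simpa only [huI, mul_zero] using mul_neg_of_pos_of_neg (hg b) hIb

/-! ### Interval arithmetic -/

/-- The real interval `[lo / scale, hi / scale]`, with nonnegative fixed-point endpoints. All
operations round outwards, so that they enclose the corresponding operations on real numbers. -/
structure FixedInterval where
  /-- The left endpoint, in units of `1 / scale`. -/
  lo : ℕ
  /-- The right endpoint, in units of `1 / scale`. -/
  hi : ℕ

namespace FixedInterval

/-- The common denominator of all endpoints. It is irreducible because only the kernel should ever
compute with it. -/
@[irreducible] def scale : ℕ := 10 ^ 24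

theorem scale_pos : (0 : ℝ) < scale := by
  unfold scale
  norm_num

instance : Membership ℝ FixedInterval := ⟨fun I x => I.lo ≤ x * scale ∧ x * scale ≤ I.hi⟩

theorem nonneg {I : FixedInterval} {x : ℝ} (h : x ∈ I) : 0 ≤ x :=
  nonneg_of_mul_nonneg_left (I.lo.cast_nonneg.trans h.1) scale_pos

/-- The interval `[m / d, n / d]` in units of `1 / scale`, rounded outwards. -/
def roundOut (m n d : ℕ) : FixedInterval := ⟨m / d, n / d + 1⟩

/-- The degenerate interval at `m / scale`. -/
def point (m : ℕ) : FixedInterval := ⟨m, m⟩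

/-- The smallest interval containing `I` and `J`, when `I` lies to the left of `J`. -/
def hull (I J : FixedInterval) : FixedInterval := ⟨I.lo, J.hi⟩

/-- The degenerate interval at the integer `n`. -/
def ofNat (n : ℕ) : FixedInterval := point (n * scale)

instance (n : ℕ) : OfNat FixedInterval n := ⟨ofNat n⟩
instance : Add FixedInterval := ⟨fun I J => ⟨I.lo + J.lo, I.hi + J.hi⟩⟩
instance : Sub FixedInterval := ⟨fun I J => ⟨I.lo - J.hi, I.hi - J.lo⟩⟩
instance : Mul FixedInterval := ⟨fun I J => roundOut (I.lo * J.lo) (I.hi * J.hi) scale⟩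
instance : Div FixedInterval := ⟨fun I J => ⟨I.lo * scale / J.hi, I.hi * scale / J.lo + 1⟩⟩
instance : Pow FixedInterval ℕ :=
  ⟨fun I n => roundOut (I.lo ^ n * scale) (I.hi ^ n * scale) (scale ^ n)⟩

variable {I J : FixedInterval} {x y : ℝ}

theorem div_le_natDiv_add_one (m n : ℕ) : (m / n : ℝ) ≤ (m / n : ℕ) + 1 := by
  rw [← Nat.floor_div_eq_div (K := ℝ)]
  exact (Nat.lt_floor_add_one _).le

theorem mem_roundOut {m n d : ℕ} (hm : (m / d : ℝ) ≤ x * scale) (hn : x * scale ≤ (n / d : ℝ)) :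
    x ∈ roundOut m n d :=
  ⟨Nat.cast_div_le.trans hm, by
    simpa [roundOut] using hn.trans (div_le_natDiv_add_one n d)⟩

theorem mem_point (m : ℕ) : (m / scale : ℝ) ∈ point m := by
  have h : (m / scale : ℝ) * scale = m := div_mul_cancel₀ _ scale_pos.ne'
  exact ⟨h.ge, h.le⟩

theorem mem_hull {a b : ℝ} (ha : a ∈ I) (hb : b ∈ J) (hx : x ∈ Set.Icc a b) : x ∈ hull I J :=
  ⟨ha.1.trans (mul_le_mul_of_nonneg_right hx.1 scale_pos.le),
    (mul_le_mul_of_nonneg_right hx.2 scale_pos.le).trans hb.2⟩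

theorem mem_ofNat (n : ℕ) : (n : ℝ) ∈ ofNat n := by
  simpa [ofNat, scale_pos.ne'] using mem_point (n * scale)

theorem zero_mem : (0 : ℝ) ∈ (0 : FixedInterval) := by
  rw [← Nat.cast_zero]
  exact mem_ofNat 0

theorem one_mem : (1 : ℝ) ∈ (1 : FixedInterval) := by
  rw [← Nat.cast_one]
  exact mem_ofNat 1

theorem ofNat_mem (n : ℕ) [n.AtLeastTwo] : (OfNat.ofNat n : ℝ) ∈ (OfNat.ofNat n : FixedInterval) :=
  mem_ofNat n

theorem mem_add (hx : x ∈ I) (hy : y ∈ J) : x + y ∈ I + J := by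
  change ((I.lo + J.lo : ℕ) : ℝ) ≤ (x + y) * scale ∧ (x + y) * scale ≤ ((I.hi + J.hi : ℕ) : ℝ)
  rw [add_mul]
  push_cast
  exact ⟨add_le_add hx.1 hy.1, add_le_add hx.2 hy.2⟩

theorem natCast_sub_eq_max (m n : ℕ) : ((m - n : ℕ) : ℝ) = max (m - n : ℝ) 0 := by
  rcases le_total n m with h | h
  · rw [Nat.cast_sub h, max_eq_left (sub_nonneg.2 (Nat.cast_le.2 h))]
  · rw [Nat.sub_eq_zero_of_le h, max_eq_right (sub_nonpos.2 (Nat.cast_le.2 h)), Nat.cast_zero]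

theorem max_sub_mem (hx : x ∈ I) (hy : y ∈ J) : max (x - y) 0 ∈ I - J := by
  change ((I.lo - J.hi : ℕ) : ℝ) ≤ max (x - y) 0 * scale ∧
    max (x - y) 0 * scale ≤ ((I.hi - J.lo : ℕ) : ℝ)
  rw [max_mul_of_nonneg _ _ scale_pos.le, sub_mul, zero_mul, natCast_sub_eq_max,
    natCast_sub_eq_max]
  exact ⟨max_le_max_right 0 (sub_le_sub hx.1 hy.2), max_le_max_right 0 (sub_le_sub hx.2 hy.1)⟩

theorem mem_sub (hx : x ∈ I) (hy : y ∈ J) (h : y ≤ x) : x - y ∈ I - J :=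
  max_eq_left (sub_nonneg.2 h) ▸ max_sub_mem hx hy

theorem mem_mul (hx : x ∈ I) (hy : y ∈ J) : x * y ∈ I * J := by
  have hscale : x * y * scale = x * scale * (y * scale) / scale := by
    field_simp [scale_pos.ne']
  have := mul_nonneg (nonneg hx) scale_pos.le
  have := mul_nonneg (nonneg hy) scale_pos.le
  apply mem_roundOut <;> rw [hscale] <;> push_cast <;> gcongr
  exacts [hx.1, hy.1, hx.2, hy.2]

theorem mem_div (hx : x ∈ I) (hy : y ∈ J) (hJ : 0 < J.lo) : x / y ∈ I / J := by
  have hlo : (0 : ℝ) < J.lo := Nat.cast_pos.2 hJ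
  have := mul_nonneg (nonneg hx) scale_pos.le
  have hy' : 0 < y * scale := hlo.trans_le hy.1
  have hscale : x / y * scale = x * scale * scale / (y * scale) := by
    field_simp [scale_pos.ne']
  change ((I.lo * scale / J.hi : ℕ) : ℝ) ≤ x / y * scale ∧
    x / y * scale ≤ ((I.hi * scale / J.lo + 1 : ℕ) : ℝ)
  rw [hscale]
  constructor
  · refine Nat.cast_div_le.trans ?_
    push_cast
    gcongr
    exacts [hx.1, hy.2]
  · push_cast
    refine le_trans ?_ (div_le_natDiv_add_one _ _)
    push_cast
    gcongr
    exacts [hx.2, hy.1]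

theorem mem_div_ofNat (hx : x ∈ I) (n : ℕ) [n.AtLeastTwo] :
    x / OfNat.ofNat n ∈ I / (OfNat.ofNat n : FixedInterval) :=
  mem_div hx (ofNat_mem n) (Nat.mul_pos (NeZero.pos n) (Nat.cast_pos.1 scale_pos))

theorem mem_pow (hx : x ∈ I) (n : ℕ) : x ^ n ∈ I ^ n := by
  have hscale : x ^ n * scale = (x * scale) ^ n * scale / scale ^ n := by
    rw [mul_pow]
    field_simp [scale_pos.ne']
  have := mul_nonneg (nonneg hx) scale_pos.le
  apply mem_roundOut <;> rw [hscale] <;> push_cast <;> gcongr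
  exacts [hx.1, hx.2]

/-- `forceNat n k` is `k n`, but makes the kernel evaluate `n` before substituting it in `k`. -/
def forceNat {β : Type} (n : ℕ) (k : ℕ → β) : β := n.casesOn (k 0) fun m => k (m + 1)

theorem forceNat_eq {β : Type} (n : ℕ) (k : ℕ → β) : forceNat n k = k n := by
  cases n <;> rfl

/-- `force I k` is `k I`, but makes the kernel evaluate `I` before substituting it in `k`. -/
def force {β : Type} (I : FixedInterval) (k : FixedInterval → β) : β :=
  forceNat I.lo fun a => forceNat I.hi fun b => k ⟨a, b⟩

theorem force_eq {β : Type} (I : FixedInterval) (k : FixedInterval → β) : force I k = k I := by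
  simp only [force, forceNat_eq]

/-- Horner evaluation of `1 + z + ⋯ + z^(n-1)/(n-1)! + c z^n/n!`. -/
def expHorner (z : FixedInterval) : ℕ → FixedInterval → FixedInterval
  | 0, c => c
  | n + 1, c => c.force fun c => expHorner z n (1 + z * c / ofNat (n + 1))

/-- An enclosure of `exp (-x)` for `x` in `I`, as `exp (x / 1024) ^ (-1024)`. -/
def expNeg (I : FixedInterval) : FixedInterval :=
  (I / 1024).force fun z =>
    bif z.hi.ble scale then (1 / expHorner z 4 (hull 1 2)) ^ 1024 else hull 0 1

/-- An approximation to `log (m / scale)` in units of `1 / scale`, from the Padé approximant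
`2 z (15 - 4 z²) / (15 - 9 z²)` of `2 artanh z = log ((1 + z) / (1 - z))`. Nothing is claimed about
its quality. -/
def logGuess (m : ℕ) : ℕ :=
  forceNat (m / scale).log2 fun j => forceNat (m / 2 ^ j) fun y =>
  forceNat ((y - scale) * scale / (y + scale)) fun z => forceNat (z * z / scale) fun w =>
  2 * z * (15 * scale - 4 * w) / (15 * scale - 9 * w) + j * 693147180559945309417232

/-- An enclosure of `log x` for `x ≥ 1` in `I`: the guess `u` is corrected by
`1 - 1 / v ≤ log v ≤ v - 1`, where `v = x exp (-u)`. -/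
def log (I : FixedInterval) : FixedInterval :=
  I.force fun I => forceNat (logGuess I.lo) fun u => (I * expNeg (point u)).force fun m =>
  hull (bif m.lo.ble 0 then 0 else point u + 1 - 1 / m) (point u + m - 1)

theorem mem_expHorner {z c : FixedInterval} {r : ℝ} (hx : x ∈ z) (n : ℕ) (hr : r ∈ c) :
    ∑ m ∈ Finset.range n, x ^ m / m.factorial + x ^ n / n.factorial * r ∈ expHorner z n c := by
  induction n generalizing c r with
  | zero => simpa [expHorner] using hr
  | succ n ih =>
    have h := ih (mem_add one_mem (mem_div (mem_mul hx hr) (mem_ofNat (n + 1))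
      (Nat.mul_pos n.succ_pos (Nat.cast_pos.1 scale_pos))))
    rw [expHorner, force_eq]
    convert! h using 1
    rw [Finset.sum_range_succ, Nat.factorial_succ]
    push_cast
    field_simp
    ring

theorem scale_le_expHorner_lo (z : FixedInterval) (n : ℕ) {c : FixedInterval} (hc : scale ≤ c.lo) :
    scale ≤ (expHorner z n c).lo := by
  induction n generalizing c with
  | zero => exact hc
  | succ n ih =>
    rw [expHorner, force_eq]
    exact ih (Nat.le_add_right_of_le (Nat.one_mul scale).ge)

theorem exp_eq_sum_add {y : ℝ} (hy : 0 ≤ y) (hy1 : y ≤ 1) {n : ℕ} (hn : 0 < n) :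
    ∃ r ∈ Set.Icc (1 : ℝ) 2,
      exp y = ∑ m ∈ Finset.range n, y ^ m / m.factorial + y ^ n / n.factorial * r := by
  rcases hy.eq_or_lt with rfl | hy0
  · refine ⟨1, by norm_num, ?_⟩
    obtain ⟨n, rfl⟩ := Nat.exists_eq_succ_of_ne_zero hn.ne'
    simp [Finset.sum_range_succ']
  have hterm : 0 < y ^ n / n.factorial := by positivity
  have lower := Real.sum_le_exp_of_nonneg hy (n + 1)
  have upper := Real.exp_bound' hy hy1 hn
  have hn1 : (1 : ℝ) ≤ n := mod_cast hn
  have hratio : y ^ n * (n + 1) / (n.factorial * n) ≤ 2 * (y ^ n / n.factorial) := by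
    rw [mul_div_mul_comm, mul_comm]
    gcongr
    rw [div_le_iff₀ (by positivity)]
    linarith
  rw [Finset.sum_range_succ] at lower
  refine ⟨(exp y - ∑ m ∈ Finset.range n, y ^ m / m.factorial) / (y ^ n / n.factorial),
    ⟨?_, ?_⟩, ?_⟩
  · rw [le_div_iff₀ hterm]
    linarith
  · rw [div_le_iff₀ hterm]
    linarith
  · rw [mul_div_cancel₀ _ hterm.ne']
    ring

theorem mem_expNeg (hx : x ∈ I) : exp (-x) ∈ expNeg I := by
  rw [expNeg, force_eq]
  have hz : x / 1024 ∈ I / 1024 := mem_div_ofNat hx 1024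
  cases hle : (I / 1024 : FixedInterval).hi.ble scale
  · exact mem_hull zero_mem one_mem ⟨(exp_pos _).le, exp_le_one_iff.2 (neg_nonpos.2 (nonneg hx))⟩
  · have hz1 : x / 1024 ≤ 1 := by
      refine le_of_mul_le_mul_right ?_ scale_pos
      rw [one_mul]
      exact hz.2.trans (Nat.cast_le.2 (Nat.le_of_ble_eq_true hle))
    obtain ⟨r, hr, hexp⟩ := exp_eq_sum_add (nonneg hz) hz1 four_pos
    have hr' : r ∈ hull 1 2 := mem_hull one_mem (ofNat_mem 2) hr
    have hden := mem_expHorner hz 4 hr'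
    have hpos := (Nat.cast_pos.1 scale_pos).trans_le
      (scale_le_expHorner_lo (I / 1024) 4 (c := hull 1 2) (Nat.one_mul scale).ge)
    have h := mem_pow (mem_div one_mem hden hpos) 1024
    rw [← hexp, one_div, ← exp_neg, ← exp_nat_mul, Nat.cast_ofNat, mul_neg,
      mul_div_cancel₀ x (by norm_num)] at h
    rwa [cond_true]

theorem mem_log (hx : x ∈ I) (hx1 : 1 ≤ x) : Real.log x ∈ log I := by
  have hx0 : 0 < x := zero_lt_one.trans_le hx1
  simp only [log, force_eq, forceNat_eq]
  set u := logGuess I.lo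
  set m := I * expNeg (point u)
  have hv : x * exp (-(u / scale)) ∈ m := mem_mul hx (mem_expNeg (mem_point u))
  set v := x * exp (-(u / scale)) with hv_def
  have hv0 : 0 < v := by positivity
  have hlog : Real.log x = u / scale + Real.log v := by
    rw [hv_def, Real.log_mul hx0.ne' (exp_ne_zero _), Real.log_exp]
    ring
  have hlog0 := Real.log_nonneg hx1
  have upper := Real.log_le_sub_one_of_pos hv0
  have lower := Real.one_sub_inv_le_log_of_pos hv0
  have hhi := max_sub_mem (mem_add (mem_point u) hv) one_mem
  have hub : Real.log x ≤ max (u / scale + v - 1) 0 := le_max_of_le_left (by linarith)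
  cases hm : m.lo.ble 0
  · have hm0 : 0 < m.lo := Nat.lt_of_not_ge fun h => by
      rw [Nat.ble_eq_true_of_le h] at hm
      cases hm
    refine mem_hull (max_sub_mem (mem_add (mem_point u) one_mem) (mem_div one_mem hv hm0)) hhi
      ⟨max_le ?_ hlog0, hub⟩
    rw [one_div]
    linarith
  · exact mem_hull zero_mem hhi ⟨hlog0, hub⟩

/-- An enclosure of `log 2`. -/
def logTwo : FixedInterval := hull (6931471803 / 10000000000) (6931471808 / 10000000000)

/-- An enclosure of `log 3`. -/
def logThree : FixedInterval := hull (10986122885 / 10000000000) (10986122888 / 10000000000)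

/-- An enclosure of `log 5`. -/
def logFive : FixedInterval := hull (16094379123 / 10000000000) (16094379126 / 10000000000)

theorem mem_logTwo : Real.log 2 ∈ logTwo :=
  mem_hull (mem_div_ofNat (ofNat_mem _) _) (mem_div_ofNat (ofNat_mem _) _)
    ⟨by linarith [log_two_gt_d9], by linarith [log_two_lt_d9]⟩

theorem mem_logThree : Real.log 3 ∈ logThree :=
  mem_hull (mem_div_ofNat (ofNat_mem _) _) (mem_div_ofNat (ofNat_mem _) _)
    ⟨by linarith [log_three_gt_d9], by linarith [log_three_lt_d9]⟩

theorem mem_logFive : Real.log 5 ∈ logFive :=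
  mem_hull (mem_div_ofNat (ofNat_mem _) _) (mem_div_ofNat (ofNat_mem _) _)
    ⟨by linarith [log_five_gt_d9], by linarith [log_five_lt_d9]⟩

/-- The grid point `1 + m / scale` of the half-line `s > 1`. -/
noncomputable def node (m : ℕ) : ℝ := 1 + m / scale

theorem one_lt_node {m : ℕ} (hm : 0 < m) : 1 < node m :=
  lt_add_of_pos_right 1 (div_pos (Nat.cast_pos.2 hm) scale_pos)

theorem node_two_mul (m : ℕ) : node (2 * m + scale) = 2 * node m := by
  have := scale_pos
  rw [node, node]
  push_cast
  field_simp
  ring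

theorem node_three_mul (m : ℕ) : node (3 * m + 2 * scale) = 3 * node m := by
  have := scale_pos
  rw [node, node]
  push_cast
  field_simp
  ring

/-- `Encloses f F` says that `f m` is an enclosure of `F` at the grid point `node m`. -/
def Encloses (f : ℕ → FixedInterval) (F : ℝ → ℝ) : Prop := ∀ m, 0 < m → F (node m) ∈ f m

theorem Encloses.mul {f g : ℕ → FixedInterval} {F G : ℝ → ℝ} (hf : Encloses f F)
    (hg : Encloses g G) :
    Encloses (fun m => f m * g m) fun s => F s * G s :=
  fun m hm => mem_mul (hf m hm) (hg m hm)

/-- An enclosure of `p ^ (-s)` at `s = node m`, given an enclosure `l` of `log p`. -/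
def rpowNeg (p : ℕ) (l : FixedInterval) (m : ℕ) : FixedInterval := expNeg (point m * l) / ofNat p

theorem mem_rpowNeg {p : ℕ} (hp : 0 < p) {l : FixedInterval} (hl : Real.log p ∈ l) (m : ℕ) :
    (p : ℝ) ^ (-node m) ∈ rpowNeg p l m := by
  have hp' : (0 : ℝ) < p := Nat.cast_pos.2 hp
  have hpow : (p : ℝ) ^ (-node m) = exp (-(m / scale * Real.log p)) / p := by
    rw [rpow_def_of_pos hp', node, neg_add, mul_add, exp_add, mul_neg_one, exp_neg, exp_log hp']
    ring_nf
  rw [hpow]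
  exact mem_div (mem_expNeg (mem_mul (mem_point m) hl)) (mem_ofNat p)
    (Nat.mul_pos hp (Nat.cast_pos.1 scale_pos))

/-- An enclosure of `realZeta s` at `s = node m`, given enclosures of `2 ^ (-s)`, `3 ^ (-s)` and
`5 ^ (-s)`. -/
def zetaEnclosure (m : ℕ) (a b c : FixedInterval) : FixedInterval :=
  (1 + point m).force fun s => (a * b).force fun q =>
  1 + a + b + a ^ 2 + c + 6 * q / point m + q / 2 + s * q / 72 -
    hull 0 (s * (s + 1) * (s + 2) * (s + 9) * q / 933120)

/-- An enclosure of `siftedLog smallPrimes s` at `s = node m`, given enclosures of `2 ^ (-s)`,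
`3 ^ (-s)` and `5 ^ (-s)`. -/
def siftedLogEnclosure (m : ℕ) (a b c : FixedInterval) : FixedInterval :=
  forceNat m fun m => a.force fun a => b.force fun b => c.force fun c =>
  log (zetaEnclosure m a b c * ((1 - a) * (1 - b) * (1 - c)))

/-- An enclosure of `primeZeta s` at `s = node m`. -/
def primeZetaEnclosure (m : ℕ) : FixedInterval :=
  (rpowNeg 2 logTwo m).force fun a => (rpowNeg 3 logThree m).force fun b =>
  (rpowNeg 5 logFive m).force fun c =>
  (siftedLogEnclosure m a b c).force fun l₁ =>
  (siftedLogEnclosure (2 * m + scale) (a ^ 2) (b ^ 2) (c ^ 2)).force fun l₂ =>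
  (siftedLogEnclosure (3 * m + 2 * scale) (a ^ 3) (b ^ 3) (c ^ 3)).force fun l₃ =>
  a + b + c + l₁ - l₂ / 2 - hull (l₃ * (83 / 250)) (l₃ * (17 / 50))

/-- An enclosure of `semiprimeZeta s` at `s = node m`. -/
def semiprimeZetaEnclosure (m : ℕ) : FixedInterval :=
  (primeZetaEnclosure m).force fun P =>
  (P ^ 2 + forceNat (2 * m + scale) primeZetaEnclosure) / 2

/-- An enclosure of `exp ((1 - s) * (t / 1000))` at `s = node m`. -/
def weightEnclosure (t m : ℕ) : FixedInterval := expNeg (point m * (ofNat t / 1000))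

section Enclosures

variable {m : ℕ} {a b c : FixedInterval}

theorem mem_zetaEnclosure (hm : 0 < m) (ha : (2 : ℝ) ^ (-node m) ∈ a)
    (hb : (3 : ℝ) ^ (-node m) ∈ b) (hc : (5 : ℝ) ^ (-node m) ∈ c) :
    realZeta (node m) ∈ zetaEnclosure m a b c := by
  have hs : node m ∈ 1 + point m := mem_add one_mem (mem_point m)
  have hq := mem_mul ha hb
  have herror := realZeta_bounds_six (one_lt_node hm) rfl rfl rfl rfl
  have hpos := (realZeta_pos (one_lt_node hm)).le
  simp only [zetaEnclosure, force_eq]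
  have hmain := mem_add (mem_add (mem_add (mem_add (mem_add (mem_add (mem_add one_mem ha) hb)
    (mem_pow ha 2)) hc) (mem_div (mem_mul (ofNat_mem 6) hq) (mem_point m) hm))
    (mem_div_ofNat hq 2)) (mem_div_ofNat (mem_mul hs hq) 72)
  have hbound := mem_div_ofNat (mem_mul (mem_mul (mem_mul (mem_mul hs (mem_add hs one_mem))
    (mem_add hs (ofNat_mem 2))) (mem_add hs (ofNat_mem 9))) hq) 933120
  rw [show (m / scale : ℝ) = node m - 1 by rw [node]; ring] at hmain
  have h := mem_sub hmain (mem_hull zero_mem hbound herror) (by linarith)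
  rwa [sub_sub_cancel] at h

theorem mem_siftedLogEnclosure (hm : 0 < m) (ha : (2 : ℝ) ^ (-node m) ∈ a)
    (hb : (3 : ℝ) ^ (-node m) ∈ b) (hc : (5 : ℝ) ^ (-node m) ∈ c) :
    siftedLog smallPrimes (node m) ∈ siftedLogEnclosure m a b c := by
  have hs := one_lt_node hm
  have hfactor {p : ℝ} (hp : 1 < p) : p ^ (-node m) < 1 := rpow_neg_lt_one hp (by linarith)
  have hprod := prod_smallPrimes fun p => 1 - (p : ℝ) ^ (-node m)
  simp only [Nat.cast_ofNat] at hprod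
  have h₂ := hfactor one_lt_two
  have h₃ := hfactor (p := 3) (by norm_num)
  have h₅ := hfactor (p := 5) (by norm_num)
  have hpos : 0 < realZeta (node m) * ((1 - 2 ^ (-node m)) * (1 - 3 ^ (-node m)) *
      (1 - 5 ^ (-node m))) :=
    mul_pos (realZeta_pos hs) (mul_pos (mul_pos (sub_pos.2 h₂) (sub_pos.2 h₃)) (sub_pos.2 h₅))
  have hlog := siftedLog_nonneg smallPrimes (zero_lt_one.trans hs)
  rw [siftedLog_eq_log _ hs, hprod] at hlog ⊢
  simp only [siftedLogEnclosure, force_eq, forceNat_eq]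
  exact mem_log (mem_mul (mem_zetaEnclosure hm ha hb hc) (mem_mul (mem_mul
    (mem_sub one_mem ha h₂.le) (mem_sub one_mem hb h₃.le)) (mem_sub one_mem hc h₅.le)))
    ((log_nonneg_iff hpos).1 hlog)

theorem mem_siftedLogEnclosure_pow {k n : ℕ} (hn : 0 < n) (hk : node n = k * node m)
    (ha : (2 : ℝ) ^ (-node m) ∈ a) (hb : (3 : ℝ) ^ (-node m) ∈ b) (hc : (5 : ℝ) ^ (-node m) ∈ c) :
    siftedLog smallPrimes (k * node m) ∈ siftedLogEnclosure n (a ^ k) (b ^ k) (c ^ k) := by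
  have hpow (p : ℝ) (hp : 0 ≤ p) : p ^ (-node n) = (p ^ (-node m)) ^ k := by
    rw [hk, ← rpow_mul_natCast hp]
    ring_nf
  rw [← hk]
  refine mem_siftedLogEnclosure hn ?_ ?_ ?_ <;> rw [hpow _ (by norm_num)] <;>
    exact mem_pow ‹_› k

theorem encloses_primeZeta : Encloses primeZetaEnclosure primeZeta := by
  intro m hm
  have ha : (2 : ℝ) ^ (-node m) ∈ rpowNeg 2 logTwo m := mem_rpowNeg two_pos mem_logTwo m
  have hb : (3 : ℝ) ^ (-node m) ∈ rpowNeg 3 logThree m := mem_rpowNeg three_pos mem_logThree m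
  have hc : (5 : ℝ) ^ (-node m) ∈ rpowNeg 5 logFive m := mem_rpowNeg (by norm_num) mem_logFive m
  have h₁ := mem_siftedLogEnclosure hm ha hb hc
  have h₂ := mem_siftedLogEnclosure_pow (k := 2) (by omega) (node_two_mul m) ha hb hc
  have h₃ := mem_siftedLogEnclosure_pow (k := 3) (by omega) (node_three_mul m) ha hb hc
  have hs := one_lt_node hm
  have hsieve := primeZeta_sieve_defect_mem_Icc (fun _ => seven_le_of_notMem_smallPrimes) hs
  have hP := isExpSum_primeZeta.nonneg hs
  have h₃0 := siftedLog_nonneg smallPrimes (s := 3 * node m) (by linarith)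
  have hsum := sum_smallPrimes fun p => (p : ℝ) ^ (-node m)
  simp only [Nat.cast_ofNat] at h₂ h₃ hsum
  rw [hsum] at hsieve
  have hdefect := mem_hull (mem_mul h₃ (mem_div_ofNat (ofNat_mem 83) 250))
    (mem_mul h₃ (mem_div_ofNat (ofNat_mem 17) 50)) hsieve
  simp only [primeZetaEnclosure, force_eq]
  have h := mem_sub (mem_sub (mem_add (mem_add (mem_add ha hb) hc) h₁) (mem_div_ofNat h₂ 2)
    (by linarith [hsieve.1])) hdefect (by linarith)
  rwa [sub_sub_cancel] at h

theorem encloses_semiprimeZeta : Encloses semiprimeZetaEnclosure semiprimeZeta := by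
  intro m hm
  have h := encloses_primeZeta (2 * m + scale) (by omega)
  rw [node_two_mul] at h
  simp only [semiprimeZetaEnclosure, force_eq, forceNat_eq]
  exact mem_div_ofNat (mem_add (mem_pow (encloses_primeZeta m hm) 2) h) 2

theorem encloses_weight (t : ℕ) :
    Encloses (weightEnclosure t) fun s => exp ((1 - s) * (t / 1000)) := by
  intro m _
  have hnode : 1 - node m = -(m / scale) := by rw [node, sub_add_cancel_left]
  simp only [hnode, neg_mul]
  exact mem_expNeg (mem_mul (mem_point m) (mem_div_ofNat (mem_ofNat t) 1000))

end Enclosures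

end FixedInterval

/-! ### Quadrature -/

namespace FixedInterval

/-- Lower bound, in units of `1 / scale`, for the integral over consecutive intervals of half-widths
`l / scale` starting at `node a`, by the two-point Gauss rule. -/
def lowerSum (f : ℕ → FixedInterval) : ℕ → List ℕ → ℕ
  | _, [] => 0
  | a, h :: l =>
    forceNat a fun a => forceNat (h * 57735 / 100000) fun d =>
    forceNat (h * (forceNat (a + h - d) (fun m => (f m).lo) +
      forceNat (a + h + d) fun m => (f m).lo) / scale) fun v =>
    v + lowerSum f (a + 2 * h) l

/-- Upper bound, in units of `1 / scale`, for the integral over consecutive intervals of half-widths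
`l / scale` starting at `node a`, by Simpson's rule. -/
def upperSum (f : ℕ → FixedInterval) : ℕ → List ℕ → ℕ
  | _, [] => 0
  | a, h :: l =>
    forceNat a fun a =>
    forceNat (h * (forceNat a (fun m => (f m).hi) + 4 * forceNat (a + h) (fun m => (f m).hi) +
      forceNat (a + 2 * h) fun m => (f m).hi) / (3 * scale) + 1) fun v =>
    v + upperSum f (a + 2 * h) l

section Quadrature

variable {f : ℕ → FixedInterval} {F : ℝ → ℝ} {a h : ℕ}

theorem Encloses.lo_le (hf : Encloses f F) {m : ℕ} (hm : 0 < m) :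
    ((f m).lo / scale : ℝ) ≤ F (node m) :=
  (div_le_iff₀ scale_pos).2 (hf m hm).1

theorem Encloses.le_hi (hf : Encloses f F) {m : ℕ} (hm : 0 < m) :
    F (node m) ≤ ((f m).hi / scale : ℝ) :=
  (le_div_iff₀ scale_pos).2 (hf m hm).2

theorem node_add (a h : ℕ) : node (a + h) = node a + h / scale := by
  rw [node, node]
  push_cast
  ring

theorem node_sub {a h : ℕ} (hle : h ≤ a) : node (a - h) = node a - h / scale := by
  rw [node, node, Nat.cast_sub hle]
  ring

theorem node_add_sub (a h : ℕ) : node (a + h) - h / scale = node a := by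
  rw [node_add, add_sub_cancel_right]

theorem node_add_add (a h : ℕ) : node (a + h) + h / scale = node (a + 2 * h) := by
  rw [← node_add, two_mul, add_assoc]

theorem sq_gauss_offset_le {d h : ℕ} (hd : d * 100000 ≤ h * 57735) :
    (d / scale : ℝ) ^ 2 ≤ (h / scale) ^ 2 / 3 := by
  have hle : (d * 100000 : ℝ) ≤ h * 57735 := mod_cast hd
  rw [div_pow, div_pow, div_right_comm]
  gcongr
  calc (d : ℝ) ^ 2 ≤ (0.57735 * h) ^ 2 := by gcongr; linarith
    _ ≤ (h : ℝ) ^ 2 / 3 := by nlinarith [sq_nonneg (h : ℝ)]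

theorem gauss_cell_le (hF : IsExpSum 1 F) (hf : Encloses f F) (ha : 0 < a) {d : ℕ}
    (hd : d = h * 57735 / 100000) :
    ((h * ((f (a + h - d)).lo + (f (a + h + d)).lo) / scale : ℕ) / scale : ℝ) ≤
      ∫ s in (node a)..(node (a + 2 * h)), F s := by
  have hS := scale_pos
  have hgauss := hF.gauss_le_integral (m := node (a + h)) (by positivity)
    (sq_gauss_offset_le (d := d) (h := h) (by omega)) (node_add_sub a h ▸ one_lt_node ha)
  rw [node_add_sub, node_add_add, ← node_sub (by omega), ← node_add] at hgauss
  calc ((h * ((f (a + h - d)).lo + (f (a + h + d)).lo) / scale : ℕ) / scale : ℝ)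
      ≤ h * ((f (a + h - d)).lo + (f (a + h + d)).lo) / scale / scale := by
        gcongr
        exact_mod_cast Nat.cast_div_le
    _ = h / scale * ((f (a + h - d)).lo / scale + (f (a + h + d)).lo / scale) := by ring
    _ ≤ h / scale * (F (node (a + h - d)) + F (node (a + h + d))) := by
        gcongr <;> exact hf.lo_le (by omega)
    _ ≤ _ := hgauss

theorem le_simpson_cell (hF : IsExpSum 1 F) (hf : Encloses f F) (ha : 0 < a) :
    ∫ s in (node a)..(node (a + 2 * h)), F s ≤
      ((h * ((f a).hi + 4 * (f (a + h)).hi + (f (a + 2 * h)).hi) / (3 * scale) + 1 : ℕ) /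
        scale : ℝ) := by
  have hS := scale_pos
  have hsimpson := hF.integral_le_simpson (m := node (a + h)) (h := h / scale) (by positivity)
    (node_add_sub a h ▸ one_lt_node ha)
  rw [node_add_sub, node_add_add] at hsimpson
  calc ∫ s in (node a)..(node (a + 2 * h)), F s
      ≤ h / scale / 3 * (F (node a) + 4 * F (node (a + h)) + F (node (a + 2 * h))) := hsimpson
    _ ≤ h / scale / 3 * ((f a).hi / scale + 4 * ((f (a + h)).hi / scale) +
          (f (a + 2 * h)).hi / scale) := by
        gcongr <;> exact hf.le_hi (by omega)
    _ = h * ((f a).hi + 4 * (f (a + h)).hi + (f (a + 2 * h)).hi) / (3 * scale) / scale := by ring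
    _ ≤ _ := by
        gcongr
        exact_mod_cast div_le_natDiv_add_one _ _

theorem lowerSum_le_integral (hF : IsExpSum 1 F) (hf : Encloses f F) (ha : 0 < a) (l : List ℕ) :
    (lowerSum f a l / scale : ℝ) ≤ ∫ s in (node a)..(node (a + 2 * l.sum)), F s := by
  induction l generalizing a with
  | nil => simp [lowerSum]
  | cons h l ih =>
    rw [List.sum_cons, mul_add, ← add_assoc, ← intervalIntegral.integral_add_adjacent_intervals
      (hF.intervalIntegrable (one_lt_node ha) (one_lt_node (by omega : 0 < a + 2 * h)))
      (hF.intervalIntegrable (one_lt_node (by omega)) (one_lt_node (by omega)))]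
    simp only [lowerSum, forceNat_eq]
    rw [Nat.cast_add, add_div]
    exact add_le_add (gauss_cell_le hF hf ha rfl) (ih (by omega))

theorem integral_le_upperSum (hF : IsExpSum 1 F) (hf : Encloses f F) (ha : 0 < a) (l : List ℕ) :
    ∫ s in (node a)..(node (a + 2 * l.sum)), F s ≤ upperSum f a l / scale := by
  induction l generalizing a with
  | nil => simp [upperSum]
  | cons h l ih =>
    rw [List.sum_cons, mul_add, ← add_assoc, ← intervalIntegral.integral_add_adjacent_intervals
      (hF.intervalIntegrable (one_lt_node ha) (one_lt_node (by omega : 0 < a + 2 * h)))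
      (hF.intervalIntegrable (one_lt_node (by omega)) (one_lt_node (by omega)))]
    simp only [upperSum, forceNat_eq]
    rw [Nat.cast_add, add_div]
    exact add_le_add (le_simpson_cell hF hf ha) (ih (by omega))

end Quadrature

/-- The left end of the numerical integration, `2^(-48)` beyond the singularity at `1`. -/
def meshStart : ℕ := scale / 2 ^ 48

/-- Half-widths of the integration cells. They grow with the distance from the singularity at `1`,
and their number balances the discretisation error against the time of evaluation. -/
def mesh : List ℕ :=
  [40, 32, 24, 20, 18, 17, 16, 15, 14, 13, 13, 12, 11, 11, 10, 10, 9, 9, 9, 8, 8, 8, 7, 7, 7, 7, 6,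
    6, 6, 6, 5, 5, 5, 5, 5, 4, 4, 4, 4, 4, 3, 3, 3, 3, 3, 3, 2, 2, 2, 2, 2, 1, 1, 1, 0, 0].map
    (fun e => scale / 2 ^ (e + 1)) ++ [scale, 2 * scale, 2 * scale, 4 * scale, 4 * scale]

/-- An enclosure of the integrand of `primeZeta` with the weight at `t / 1000`. -/
def primeIntegrand (t m : ℕ) : FixedInterval :=
  forceNat m fun m => primeZetaEnclosure m * weightEnclosure t m

/-- An enclosure of the integrand of `semiprimeZeta` with the weight at `t / 1000`. -/
def semiprimeIntegrand (t m : ℕ) : FixedInterval :=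
  forceNat m fun m => semiprimeZetaEnclosure m * weightEnclosure t m

set_option maxRecDepth 100000 in
theorem upperSum_semiprime_add_le_lowerSum_prime :
    upperSum (semiprimeIntegrand 1044) meshStart mesh + scale / 50000 ≤
      lowerSum (primeIntegrand 1044) meshStart mesh := by
  decide +kernel

set_option maxRecDepth 100000 in
theorem upperSum_prime_add_le_lowerSum_semiprime :
    upperSum (primeIntegrand 1045) meshStart mesh + scale / 50000 ≤
      lowerSum (semiprimeIntegrand 1045) meshStart mesh := by
  decide +kernel

theorem meshStart_pos : 0 < meshStart := by
  unfold meshStart scale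
  norm_num

theorem node_meshStart_sub_one_le : node meshStart - 1 ≤ (1 / 2 ^ 24) ^ 2 := by
  rw [node, meshStart, add_sub_cancel_left, div_le_iff₀ scale_pos]
  refine Nat.cast_div_le.trans (le_of_eq ?_)
  push_cast
  ring

theorem le_node_meshEnd : 32 ≤ node (meshStart + 2 * mesh.sum) := by
  have hle : 31 * scale ≤ meshStart + 2 * mesh.sum := by decide +kernel
  have hle' : (31 : ℝ) ≤ (meshStart + 2 * mesh.sum : ℕ) / scale :=
    (le_div_iff₀ scale_pos).2 (mod_cast hle)
  rw [node]
  linarith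

theorem mesh_truncation_error_lt :
    48 * √(node meshStart - 1) + 2 * exp ((2 - node (meshStart + 2 * mesh.sum)) / 2) <
      1 / 50000 := by
  have hsqrt : √(node meshStart - 1) ≤ 1 / 2 ^ 24 :=
    (sqrt_le_left (by norm_num)).2 node_meshStart_sub_one_le
  have hexp : exp ((2 - node (meshStart + 2 * mesh.sum)) / 2) ≤ 1 / 10 ^ 6 := calc
    exp ((2 - node (meshStart + 2 * mesh.sum)) / 2) ≤ exp (-15) :=
      exp_le_exp.2 (by linarith [le_node_meshEnd])
    _ = (exp 1 ^ 15)⁻¹ := by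
      rw [← exp_nat_mul, ← exp_neg]
      norm_num
    _ ≤ (2.7 ^ 15)⁻¹ := by
      gcongr
      linarith [exp_one_gt_d9]
    _ ≤ 1 / 10 ^ 6 := by norm_num
  norm_num at hsqrt hexp
  linarith

theorem integral_lt_integral_of_upperSum_le_lowerSum {F G : ℝ → ℝ} {f g : ℕ → FixedInterval}
    (hF : IsTameExpSum F) (hG : IsTameExpSum G) (hf : Encloses f F) (hg : Encloses g G)
    (h : upperSum g meshStart mesh + scale / 50000 ≤ lowerSum f meshStart mesh) :
    ∫ s in Set.Ioi 1, G s < ∫ s in Set.Ioi 1, F s := by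
  have hstart := one_lt_node meshStart_pos
  have hend := le_node_meshEnd
  have hmargin : (upperSum g meshStart mesh / scale + 1 / 50000 : ℝ) ≤
      lowerSum f meshStart mesh / scale := by
    have hscale : scale = 50000 * (scale / 50000) := by
      unfold scale
      norm_num
    have hscale' : (scale : ℝ) = 50000 * (scale / 50000 : ℕ) := mod_cast hscale
    have hcast : (upperSum g meshStart mesh + (scale / 50000 : ℕ) : ℝ) ≤
      lowerSum f meshStart mesh := mod_cast h
    rw [le_div_iff₀ scale_pos, add_mul, div_mul_cancel₀ _ scale_pos.ne']
    linarith
  calc ∫ s in Set.Ioi 1, G s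
      ≤ (∫ s in (node meshStart)..(node (meshStart + 2 * mesh.sum)), G s) +
          (48 * √(node meshStart - 1) + 2 * exp ((2 - node (meshStart + 2 * mesh.sum)) / 2)) :=
        hG.integral_le_intervalIntegral_add hstart.le
          (by linarith [node_meshStart_sub_one_le]) (by linarith)
    _ < upperSum g meshStart mesh / scale + 1 / 50000 :=
        add_lt_add_of_le_of_lt (integral_le_upperSum hG.isExpSum hg meshStart_pos mesh)
          mesh_truncation_error_lt
    _ ≤ lowerSum f meshStart mesh / scale := hmargin
    _ ≤ ∫ s in (node meshStart)..(node (meshStart + 2 * mesh.sum)), F s :=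
        lowerSum_le_integral hF.isExpSum hf meshStart_pos mesh
    _ ≤ ∫ s in Set.Ioi 1, F s :=
        hF.intervalIntegral_le hstart.le (by linarith [node_meshStart_sub_one_le])

theorem encloses_primeIntegrand (t : ℕ) :
    Encloses (primeIntegrand t) fun s => primeZeta s * exp ((1 - s) * (t / 1000)) := by
  intro m hm
  rw [primeIntegrand, forceNat_eq]
  exact encloses_primeZeta.mul (encloses_weight t) m hm

theorem encloses_semiprimeIntegrand (t : ℕ) :
    Encloses (semiprimeIntegrand t) fun s => semiprimeZeta s * exp ((1 - s) * (t / 1000)) := by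
  intro m hm
  rw [semiprimeIntegrand, forceNat_eq]
  exact encloses_semiprimeZeta.mul (encloses_weight t) m hm

end FixedInterval

theorem laplaceFrom_semiprimeZeta_lt_primeZeta :
    laplaceFrom 1 semiprimeZeta 1.044 < laplaceFrom 1 primeZeta 1.044 := by
  have ht : (1.044 : ℝ) = (1044 : ℕ) / 1000 := by norm_num
  rw [ht]
  exact FixedInterval.integral_lt_integral_of_upperSum_le_lowerSum
    (isTameExpSum_primeZeta.mul_exp (by positivity))
    (isTameExpSum_semiprimeZeta.mul_exp (by positivity))
    (FixedInterval.encloses_primeIntegrand 1044) (FixedInterval.encloses_semiprimeIntegrand 1044)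
    FixedInterval.upperSum_semiprime_add_le_lowerSum_prime

theorem laplaceFrom_primeZeta_lt_semiprimeZeta :
    laplaceFrom 1 primeZeta 1.045 < laplaceFrom 1 semiprimeZeta 1.045 := by
  have ht : (1.045 : ℝ) = (1045 : ℕ) / 1000 := by norm_num
  rw [ht]
  exact FixedInterval.integral_lt_integral_of_upperSum_le_lowerSum
    (isTameExpSum_semiprimeZeta.mul_exp (by positivity))
    (isTameExpSum_primeZeta.mul_exp (by positivity))
    (FixedInterval.encloses_semiprimeIntegrand 1045) (FixedInterval.encloses_primeIntegrand 1045)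
    FixedInterval.upperSum_prime_add_le_lowerSum_semiprime

/-- There exists a unique real `t ≥ 0` with
`∫₁^∞ [P(s) − (P(s)² + P(2s))/2] e^{(1−s)t} ds = 0`, and it lies in
`(1.044, 1.045)`. -/
theorem stmt_0 :
    (∃! t : ℝ, 0 ≤ t ∧
      (∫ s in Set.Ioi (1:ℝ),
        (primeZeta s - (primeZeta s ^ 2 + primeZeta (2 * s)) / 2) * Real.exp ((1 - s) * t)) = 0) ∧
    (∀ t : ℝ, 0 ≤ t →
      (∫ s in Set.Ioi (1:ℝ),
        (primeZeta s - (primeZeta s ^ 2 + primeZeta (2 * s)) / 2) * Real.exp ((1 - s) * t)) = 0 →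
      1.044 < t ∧ t < 1.045) := by
  have hP := isTameExpSum_primeZeta.integrableOn
  have hQ := isTameExpSum_semiprimeZeta.integrableOn
  obtain ⟨s₀, hs₀, hpos, hneg⟩ := exists_semiprimeZeta_sign_change
  have hanti := strictAntiOn_exp_mul_laplaceFrom (hP.sub hQ) hs₀
    (fun s hs => sub_pos.2 (hpos s hs)) fun s hs1 hs => sub_nonpos.2 (hneg s hs1 hs)
  refine existsUnique_zero_of_strictAntiOn_mul (I := laplaceFrom 1 (primeZeta - semiprimeZeta))
    (by norm_num) (by norm_num) (continuousOn_laplaceFrom (hP.sub hQ)) (fun t => exp_pos _) hanti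
    ?_ ?_
  · rw [laplaceFrom_sub hP hQ (by norm_num)]
    exact sub_pos.2 laplaceFrom_semiprimeZeta_lt_primeZeta
  · rw [laplaceFrom_sub hP hQ (by norm_num)]
    exact sub_neg.2 laplaceFrom_primeZeta_lt_semiprimeZeta
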